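/- arXiv:1003.0752 — 2 statements merged into one kernel-verified Lean document; each statement's English description precedes it below -/
import Mathlib

section
/- Fix a real number r ≥ 1 such that d_r is defined (r a positive integer). Then there is a constant A_r > 0 such that for all 2 ≤ x ≤ T, ∑_{k ≤ x} d_r(k)²/k = A_r (log x)^{r²} + O((log T)^{r²−1}), uniformly in x, where the implied constant depends only on r. -/
open ArithmeticFunction Finset

/-- The `r`-fold divisor function. -/
def dFold (r : ℕ) (n : ℕ) : ℕ := (ArithmeticFunction.zeta ^ r) n


namespace DFoldAux

lemma pow_sub_upper (a b : ℝ) (n : ℕ) (hb : 0 ≤ b) (hab : b ≤ a) :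
    a ^ (n + 1) - b ^ (n + 1) ≤ (n + 1) * (a - b) * a ^ n := by
  induction n with
  | zero => simp
  | succ n ih =>
    have h1 : b ^ (n + 1) ≤ a ^ (n + 1) := pow_le_pow_left₀ hb hab _
    have ha : 0 ≤ a := hb.trans hab
    have h2 := mul_le_mul_of_nonneg_left ih ha
    have h3 := mul_le_mul_of_nonneg_left h1 (sub_nonneg.2 hab)
    have e1 : a ^ (n + 1 + 1) - b ^ (n + 1 + 1)
        = a * (a ^ (n + 1) - b ^ (n + 1)) + (a - b) * b ^ (n + 1) := by ring
    have e2 : a * ((n + 1) * (a - b) * a ^ n) = (n + 1) * (a - b) * a ^ (n + 1) := by ring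
    push_cast
    rw [e1]
    rw [e2] at h2
    linarith

lemma pow_sub_lower (a b : ℝ) (n : ℕ) (hb : 0 ≤ b) (hab : b ≤ a) :
    (n + 1) * (a - b) * b ^ n ≤ a ^ (n + 1) - b ^ (n + 1) := by
  induction n with
  | zero => simp
  | succ n ih =>
    have h1 : b ^ (n + 1) ≤ a ^ (n + 1) := pow_le_pow_left₀ hb hab _
    have h2 := mul_le_mul_of_nonneg_left ih hb
    have h3 := mul_le_mul_of_nonneg_left h1 (sub_nonneg.2 hab)
    have e1 : a ^ (n + 1 + 1) - b ^ (n + 1 + 1)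
        = b * (a ^ (n + 1) - b ^ (n + 1)) + (a - b) * a ^ (n + 1) := by ring
    have e2 : b * ((n + 1) * (a - b) * b ^ n) = (n + 1) * (a - b) * b ^ (n + 1) := by ring
    push_cast
    rw [e1]
    rw [e2] at h2
    linarith

lemma log_succ_sub_le (m : ℕ) (hm : 0 < m) :
    Real.log ((m : ℝ) + 1) - Real.log m ≤ 1 / m := by
  have hm' : (0 : ℝ) < m := by exact_mod_cast hm
  rw [← Real.log_div (by positivity) (by positivity)]
  have := Real.log_le_sub_one_of_pos (x := ((m : ℝ) + 1) / m) (by positivity)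
  have e : ((m : ℝ) + 1) / m - 1 = 1 / m := by field_simp; ring
  linarith

lemma log_succ_sub_ge (m : ℕ) (hm : 0 < m) :
    1 / ((m : ℝ) + 1) ≤ Real.log ((m : ℝ) + 1) - Real.log m := by
  have hm' : (0 : ℝ) < m := by exact_mod_cast hm
  have := Real.log_le_sub_one_of_pos (x := (m : ℝ) / (m + 1)) (by positivity)
  rw [Real.log_div (by positivity) (by positivity)] at this
  have e : (m : ℝ) / (m + 1) - 1 = - (1 / (m + 1)) := by field_simp; ring
  linarith

lemma sum_lower (y : ℝ) (hy : 1 ≤ y) (N : ℕ) :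
    (Real.log y) ^ (N + 1) / (N + 1) ≤
      ∑ m ∈ Ioc 0 ⌊y⌋₊, (1 / (m : ℝ)) * (Real.log y - Real.log m) ^ N := by
  have key : ∀ n ≤ ⌊y⌋₊, (Real.log y) ^ (N + 1) ≤
      (N + 1) * (∑ m ∈ Ioc 0 n, (1 / (m : ℝ)) * (Real.log y - Real.log m) ^ N)
        + (max (Real.log y - Real.log ((n : ℝ) + 1)) 0) ^ (N + 1) := by
    intro n
    induction n with
    | zero =>
      intro _
      simp [Real.log_nonneg hy]
    | succ n ih =>
      intro hn
      have ih := ih (by omega)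
      have hny : ((n : ℝ) + 1) ≤ y := by
        have := (Nat.le_floor_iff (by linarith)).1 hn
        exact_mod_cast this
      have hle : Real.log ((n : ℝ) + 1) ≤ Real.log y := Real.log_le_log (by positivity) hny
      have hs := log_succ_sub_le (n + 1) (by omega)
      rw [Finset.sum_Ioc_succ_top (by omega)]
      push_cast at hs ⊢
      rw [max_eq_left (by linarith)] at ih
      set a := Real.log y - Real.log ((n : ℝ) + 1) with ha
      set b := max (Real.log y - Real.log ((n : ℝ) + 1 + 1)) 0 with hb
      have hba : b ≤ a := by
        apply max_le _ (by linarith)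
        have : Real.log ((n : ℝ) + 1) ≤ Real.log ((n : ℝ) + 1 + 1) :=
          Real.log_le_log (by positivity) (by linarith)
        linarith
      have hb2 : Real.log y - Real.log ((n : ℝ) + 1 + 1) ≤ b := le_max_left _ _
      have h1 := pow_sub_upper a b N (le_max_right _ _) hba
      have ha0 : 0 ≤ a ^ N := pow_nonneg (by linarith) _
      have h2 : ((N : ℝ) + 1) * (a - b) * a ^ N ≤ (N + 1) * (1 / ((n : ℝ) + 1)) * a ^ N := by
        apply mul_le_mul_of_nonneg_right _ ha0
        apply mul_le_mul_of_nonneg_left _ (by positivity)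
        linarith
      rw [mul_add]
      linarith
  have h := key _ le_rfl
  have hlt : Real.log y ≤ Real.log ((⌊y⌋₊ : ℝ) + 1) :=
    Real.log_le_log (by linarith) (Nat.lt_floor_add_one y).le
  rw [max_eq_right (by linarith), zero_pow (by omega), add_zero] at h
  rw [div_le_iff₀ (by positivity)]
  linarith

lemma sum_upper (y c : ℝ) (hy : 1 ≤ y) (hc : 0 ≤ c) (N : ℕ) :
    ∑ m ∈ Ioc 0 ⌊y⌋₊, (1 / (m : ℝ)) * (Real.log y - Real.log m + c) ^ N ≤
      (Real.log y + c + 1) ^ (N + 1) / (N + 1) := by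
  have key : ∀ n, n + 1 ≤ ⌊y⌋₊ →
      (N + 1) * (∑ m ∈ Ioc 0 (n + 1), (1 / (m : ℝ)) * (Real.log y - Real.log m + c) ^ N)
       ≤ (N + 1) * (Real.log y + c) ^ N + (Real.log y + c) ^ (N + 1)
        - (Real.log y - Real.log ((n : ℝ) + 1) + c) ^ (N + 1) := by
    intro n
    induction n with
    | zero =>
      intro _
      simp
    | succ n ih =>
      intro hn
      have ih := ih (by omega)
      have hny : ((n : ℝ) + 1 + 1) ≤ y := by
        have := (Nat.le_floor_iff (by linarith)).1 hn
        exact_mod_cast this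
      have hle : Real.log ((n : ℝ) + 1 + 1) ≤ Real.log y := Real.log_le_log (by positivity) hny
      have hs := log_succ_sub_ge (n + 1) (by omega)
      rw [Finset.sum_Ioc_succ_top (by omega)]
      push_cast at hs ih ⊢
      set a := Real.log y - Real.log ((n : ℝ) + 1) + c with ha
      set b := Real.log y - Real.log ((n : ℝ) + 1 + 1) + c with hb
      have hba : b ≤ a := by
        have : Real.log ((n : ℝ) + 1) ≤ Real.log ((n : ℝ) + 1 + 1) :=
          Real.log_le_log (by positivity) (by linarith)
        linarith
      have hb0 : 0 ≤ b := by linarith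
      have h1 := pow_sub_lower a b N hb0 hba
      have h2 : ((N : ℝ) + 1) * (1 / ((n : ℝ) + 1 + 1)) * b ^ N ≤ ((N : ℝ) + 1) * (a - b) * b ^ N := by
        apply mul_le_mul_of_nonneg_right _ (pow_nonneg hb0 _)
        apply mul_le_mul_of_nonneg_left _ (by positivity)
        linarith
      rw [mul_add]
      linarith
  have hf : 1 ≤ ⌊y⌋₊ := (Nat.one_le_floor_iff _).2 hy
  obtain ⟨n, hn⟩ : ∃ n, ⌊y⌋₊ = n + 1 := ⟨⌊y⌋₊ - 1, by omega⟩
  have h := key n hn.ge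
  rw [← hn] at h
  have hny : ((n : ℝ) + 1) ≤ y := by
    have := (Nat.le_floor_iff (by linarith)).1 hn.ge
    exact_mod_cast this
  have hle : Real.log ((n : ℝ) + 1) ≤ Real.log y := Real.log_le_log (by positivity) hny
  have h0 : 0 ≤ (Real.log y - Real.log ((n : ℝ) + 1) + c) ^ (N + 1) := pow_nonneg (by linarith) _
  have h3 := pow_sub_lower (Real.log y + c + 1) (Real.log y + c) N
    (by linarith [Real.log_nonneg hy]) (by linarith)
  rw [le_div_iff₀ (by positivity)]
  have e : ((N : ℝ) + 1) * (Real.log y + c + 1 - (Real.log y + c)) * (Real.log y + c) ^ N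
    = (N + 1) * (Real.log y + c) ^ N := by ring
  linarith

/-- `n ↦ f n / n`. -/
noncomputable def dv (f : ArithmeticFunction ℝ) : ArithmeticFunction ℝ :=
  ⟨fun n => f n / n, by simp⟩

lemma dv_apply (f : ArithmeticFunction ℝ) (n : ℕ) : dv f n = f n / n := rfl

lemma dv_mul (f g : ArithmeticFunction ℝ) : dv (f * g) = dv f * dv g := by
  ext n
  rw [dv_apply, mul_apply, mul_apply, Finset.sum_div]
  refine Finset.sum_congr rfl fun x hx => ?_
  rw [Nat.mem_divisorsAntidiagonal] at hx
  rw [dv_apply, dv_apply, ← hx.1]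
  push_cast
  rw [mul_div_mul_comm]

/-- The weighted summatory function. -/
noncomputable def D (f : ArithmeticFunction ℝ) (M : ℕ) : ℝ := ∑ n ∈ Ioc 0 M, dv f n

lemma D_mul (f g : ArithmeticFunction ℝ) (M : ℕ) :
    D (f * g) M = ∑ n ∈ Ioc 0 M, dv f n * D g (M / n) := by
  unfold D
  rw [dv_mul, ArithmeticFunction.sum_Ioc_mul_eq_sum_sum]

noncomputable abbrev zR : ArithmeticFunction ℝ := (ArithmeticFunction.zeta : ArithmeticFunction ℝ)

lemma dv_zR (n : ℕ) (hn : 0 < n) : dv zR n = 1 / n := by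
  rw [dv_apply]
  simp [hn.ne']

lemma D_zeta_bounds (N : ℕ) : ∀ y : ℝ, 1 ≤ y →
    (Real.log y) ^ N / N.factorial ≤ D (zR ^ N) ⌊y⌋₊ ∧
    D (zR ^ N) ⌊y⌋₊ ≤ (Real.log y + N) ^ N / N.factorial := by
  induction N with
  | zero =>
    intro y hy
    have hf : 1 ≤ ⌊y⌋₊ := (Nat.one_le_floor_iff _).2 hy
    have : D (zR ^ 0) ⌊y⌋₊ = 1 := by
      unfold D
      rw [Finset.sum_eq_single 1]
      · simp [dv_apply]
      · intro b _ hb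
        simp [dv_apply, ArithmeticFunction.one_apply_ne hb]
      · intro h
        exact absurd (Finset.mem_Ioc.2 ⟨by norm_num, hf⟩) h
    rw [this]
    simp
  | succ N ih =>
    intro y hy
    have hfac : (0 : ℝ) < N.factorial := by exact_mod_cast N.factorial_pos
    have hterm : ∀ m ∈ Ioc 0 ⌊y⌋₊, 0 < m ∧ 1 ≤ y / m ∧
        Real.log (y / m) = Real.log y - Real.log m := by
      intro m hm
      rw [Finset.mem_Ioc] at hm
      have hm0 : (0 : ℝ) < m := by exact_mod_cast hm.1
      have hmy : (m : ℝ) ≤ y := (Nat.le_floor_iff (by linarith)).1 hm.2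
      exact ⟨hm.1, by rw [le_div_iff₀ hm0]; linarith, Real.log_div (by linarith) hm0.ne'⟩
    rw [pow_succ' zR N, D_mul]
    have hl := sum_lower y hy N
    have hu := sum_upper y N hy (by positivity) N
    constructor
    · calc Real.log y ^ (N + 1) / ((N + 1).factorial : ℝ)
          = (Real.log y ^ (N + 1) / (N + 1)) / N.factorial := by
            rw [Nat.factorial_succ]; push_cast; rw [div_div]
        _ ≤ (∑ m ∈ Ioc 0 ⌊y⌋₊, (1 / (m : ℝ)) * (Real.log y - Real.log m) ^ N) / N.factorial := by
            gcongr
        _ ≤ _ := by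
            rw [Finset.sum_div]
            refine Finset.sum_le_sum fun m hm => ?_
            obtain ⟨h0, h1, h2⟩ := hterm m hm
            rw [dv_zR m h0, mul_div_assoc, ← Nat.floor_div_natCast, ← h2]
            exact mul_le_mul_of_nonneg_left (ih _ h1).1 (by positivity)
    · calc _ ≤ (∑ m ∈ Ioc 0 ⌊y⌋₊, (1 / (m : ℝ)) * (Real.log y - Real.log m + N) ^ N) / N.factorial := by
            rw [Finset.sum_div]
            refine Finset.sum_le_sum fun m hm => ?_
            obtain ⟨h0, h1, h2⟩ := hterm m hm
            rw [dv_zR m h0, mul_div_assoc, ← Nat.floor_div_natCast, ← h2]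
            exact mul_le_mul_of_nonneg_left (ih _ h1).2 (by positivity)
        _ ≤ ((Real.log y + N + 1) ^ (N + 1) / (N + 1)) / N.factorial := by
            gcongr
        _ = _ := by
            rw [Nat.factorial_succ]; push_cast; rw [div_div, add_assoc]

/-- The local power series at `p`. -/
noncomputable def loc (p : ℕ) (f : ArithmeticFunction ℝ) : PowerSeries ℝ :=
  PowerSeries.mk fun k => f (p ^ k)

lemma coeff_loc (p : ℕ) (f : ArithmeticFunction ℝ) (k : ℕ) :
    PowerSeries.coeff k (loc p f) = f (p ^ k) := by simp [loc]

lemma loc_mul (p : ℕ) (hp : p.Prime) (f g : ArithmeticFunction ℝ) :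
    loc p (f * g) = loc p f * loc p g := by
  ext k
  rw [coeff_loc, PowerSeries.coeff_mul, ArithmeticFunction.mul_apply,
    Nat.sum_divisorsAntidiagonal (fun i j => f i * g j),
    Nat.sum_divisors_prime_pow hp,
    Finset.Nat.sum_antidiagonal_eq_sum_range_succ
      (fun i j => PowerSeries.coeff i (loc p f) * PowerSeries.coeff j (loc p g))]
  refine Finset.sum_congr rfl fun i hi => ?_
  rw [Finset.mem_range] at hi
  rw [coeff_loc, coeff_loc, Nat.pow_div (by omega) hp.pos]

lemma loc_one (p : ℕ) (hp : p.Prime) : loc p 1 = 1 := by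
  ext k
  rw [coeff_loc, PowerSeries.coeff_one, ArithmeticFunction.one_apply]
  rcases k with _ | k
  · simp
  · simp [hp.one_lt.ne']

lemma loc_pow (p : ℕ) (hp : p.Prime) (f : ArithmeticFunction ℝ) (n : ℕ) :
    loc p (f ^ n) = loc p f ^ n := by
  induction n with
  | zero => simp [loc_one p hp]
  | succ n ih => rw [pow_succ, pow_succ, loc_mul p hp, ih]

noncomputable abbrev mR : ArithmeticFunction ℝ := (ArithmeticFunction.moebius : ArithmeticFunction ℝ)

lemma loc_zR (p : ℕ) (hp : p.Prime) : loc p zR = PowerSeries.mk 1 := by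
  ext k
  rw [coeff_loc]
  simp [hp.ne_zero]

lemma loc_mR (p : ℕ) (hp : p.Prime) : loc p mR = 1 - PowerSeries.X := by
  ext k
  rw [coeff_loc, map_sub, PowerSeries.coeff_one, PowerSeries.coeff_X]
  rcases k with _ | k
  · simp
  · rw [ArithmeticFunction.intCoe_apply, ArithmeticFunction.moebius_apply_prime_pow hp (by omega)]
    by_cases hk : k = 0 <;> simp [hk]

/-- `d_{d+1}^2`. -/
noncomputable def sq (d : ℕ) : ArithmeticFunction ℝ := (zR ^ (d + 1)).pmul (zR ^ (d + 1))

noncomputable def Q (d : ℕ) : PowerSeries ℝ :=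
  PowerSeries.mk fun n => ((Nat.choose (d + n) d : ℕ) : ℝ) ^ 2

lemma loc_sq (p : ℕ) (hp : p.Prime) (d : ℕ) : loc p (sq d) = Q d := by
  have h : loc p (zR ^ (d + 1)) = PowerSeries.mk fun n => ((Nat.choose (d + n) d : ℕ) : ℝ) := by
    rw [loc_pow p hp, loc_zR p hp, PowerSeries.mk_one_pow_eq_mk_choose_add]
  ext k
  have hk := congrArg (PowerSeries.coeff k) h
  rw [coeff_loc, PowerSeries.coeff_mk] at hk
  rw [coeff_loc, Q, PowerSeries.coeff_mk, sq, ArithmeticFunction.pmul_apply, hk, _root_.sq]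

noncomputable def hh (d : ℕ) : ArithmeticFunction ℝ := sq d * mR ^ ((d + 1) ^ 2)

noncomputable def G (d N : ℕ) : PowerSeries ℝ := (1 - PowerSeries.X) ^ N * Q d

lemma hh_pow (p : ℕ) (hp : p.Prime) (d k : ℕ) :
    hh d (p ^ k) = PowerSeries.coeff k (G d ((d + 1) ^ 2)) := by
  rw [← coeff_loc, hh, loc_mul p hp, loc_pow p hp, loc_sq p hp, loc_mR p hp, G, mul_comm]

lemma sq_eq (d : ℕ) : sq d = hh d * zR ^ ((d + 1) ^ 2) := by
  rw [hh, mul_assoc, ← mul_pow, ArithmeticFunction.coe_moebius_mul_coe_zeta, one_pow, mul_one]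

lemma hh_mult (d : ℕ) : (hh d).IsMultiplicative := by
  have hz : zR.IsMultiplicative := ArithmeticFunction.isMultiplicative_zeta.natCast
  have hm : mR.IsMultiplicative := ArithmeticFunction.isMultiplicative_moebius.intCast
  exact (hz.pow.pmul hz.pow).mul hm.pow

lemma G_succ (d N : ℕ) : G d (N + 1) = (1 - PowerSeries.X) * G d N := by
  rw [G, G, pow_succ']; ring

lemma coeff_zero_step (a : PowerSeries ℝ) :
    PowerSeries.coeff 0 ((1 - PowerSeries.X) * a) = PowerSeries.coeff 0 a := by
  simp [sub_mul]

lemma coeff_succ_step (a : PowerSeries ℝ) (k : ℕ) :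
    PowerSeries.coeff (k + 1) ((1 - PowerSeries.X) * a)
      = PowerSeries.coeff (k + 1) a - PowerSeries.coeff k a := by
  rw [sub_mul, one_mul, map_sub, PowerSeries.coeff_succ_X_mul]

lemma G_coeff_zero (d N : ℕ) : PowerSeries.coeff 0 (G d N) = 1 := by
  induction N with
  | zero => simp [G, Q]
  | succ N ih => rw [G_succ, coeff_zero_step, ih]

lemma G_coeff_one (d N : ℕ) : PowerSeries.coeff 1 (G d N) = ((d : ℝ) + 1) ^ 2 - N := by
  induction N with
  | zero => simp [G, Q]
  | succ N ih =>
    rw [G_succ, coeff_succ_step, zero_add, ih, G_coeff_zero]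
    push_cast; ring

lemma Q_summable (d : ℕ) (z : ℝ) (hz0 : 0 ≤ z) (hz1 : z < 1) :
    Summable fun k => |PowerSeries.coeff k (Q d)| * z ^ k := by
  rcases hz0.eq_or_lt with rfl | hz
  · refine summable_of_ne_finset_zero (s := {0}) fun k hk => ?_
    rw [Finset.mem_singleton] at hk
    simp [hk]
  have h1 : Summable fun n : ℕ => (n : ℝ) ^ (d * 2) * z ^ n :=
    summable_pow_mul_geometric_of_norm_lt_one _ (by rwa [Real.norm_of_nonneg hz0])
  have h2 := ((summable_nat_add_iff d).2 h1).mul_left ((z ^ d)⁻¹)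
  refine Summable.of_nonneg_of_le (fun k => by positivity) (fun k => ?_) h2
  rw [Q, PowerSeries.coeff_mk, abs_of_nonneg (by positivity)]
  have h3 : ((Nat.choose (d + k) d : ℕ) : ℝ) ≤ ((k + d : ℕ) : ℝ) ^ d := by
    rw [add_comm d k]; exact_mod_cast Nat.choose_le_pow _ _
  have e : (z ^ d)⁻¹ * (((k + d : ℕ) : ℝ) ^ (d * 2) * z ^ (k + d))
      = (((k + d : ℕ) : ℝ) ^ d) ^ 2 * z ^ k := by
    rw [pow_add, pow_mul]; field_simp
  rw [e]
  gcongr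

lemma G_sum (d : ℕ) (z : ℝ) (hz0 : 0 ≤ z) (hz1 : z < 1) (N : ℕ) :
    (Summable fun k => |PowerSeries.coeff k (G d N)| * z ^ k) ∧
    0 < ∑' k, PowerSeries.coeff k (G d N) * z ^ k := by
  have toS : ∀ a : PowerSeries ℝ, (Summable fun k => |PowerSeries.coeff k a| * z ^ k) →
      Summable fun k => PowerSeries.coeff k a * z ^ k := by
    intro a h
    refine Summable.of_norm (h.congr fun k => ?_)
    rw [norm_mul, Real.norm_eq_abs, Real.norm_of_nonneg (pow_nonneg hz0 k)]
  induction N with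
  | zero =>
    have e : G d 0 = Q d := by simp [G]
    rw [e]
    have h := Q_summable d z hz0 hz1
    refine ⟨h, (toS _ h).tsum_pos (fun k => ?_) 0 ?_⟩
    · rw [Q, PowerSeries.coeff_mk]; positivity
    · simp [Q]
  | succ N ih =>
    obtain ⟨h, hpos⟩ := ih
    have hS := toS _ h
    rw [G_succ]
    set a := G d N with ha
    have habs : Summable fun k => |PowerSeries.coeff k ((1 - PowerSeries.X) * a)| * z ^ k := by
      rw [← summable_nat_add_iff 1]
      refine Summable.of_nonneg_of_le (fun k => by positivity) (fun k => ?_)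
        (((summable_nat_add_iff 1).2 h).add (h.mul_left z))
      rw [coeff_succ_step]
      have := abs_sub (PowerSeries.coeff (k + 1) a) (PowerSeries.coeff k a)
      calc _ ≤ (|PowerSeries.coeff (k + 1) a| + |PowerSeries.coeff k a|) * z ^ (k + 1) := by gcongr
        _ = _ := by ring
    refine ⟨habs, ?_⟩
    have h1 := (toS _ habs).tsum_eq_zero_add
    have h2 := hS.tsum_eq_zero_add
    have h3 : ∑' k, PowerSeries.coeff (k + 1) ((1 - PowerSeries.X) * a) * z ^ (k + 1)
        = ∑' k, PowerSeries.coeff (k + 1) a * z ^ (k + 1)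
          - z * ∑' k, PowerSeries.coeff k a * z ^ k := by
      rw [← tsum_mul_left, ← ((summable_nat_add_iff 1).2 hS).tsum_sub (hS.mul_left z)]
      refine tsum_congr fun k => ?_
      rw [coeff_succ_step]; ring
    have h4 : ∑' k, PowerSeries.coeff k ((1 - PowerSeries.X) * a) * z ^ k
        = (1 - z) * ∑' k, PowerSeries.coeff k a * z ^ k := by
      rw [h1, h3, coeff_zero_step, sub_mul, one_mul]
      linarith
    rw [h4]
    exact mul_pos (by linarith) hpos

lemma local_bound (c : ℕ → ℝ) (h0 : c 0 = 1) (h1 : c 1 = 0) (z : ℝ) (hz : 0 < z)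
    (hs : Summable fun k => |c k| * z ^ k) :
    ∃ K : ℝ, 0 ≤ K ∧ ∀ q : ℝ, 0 ≤ q → q ≤ z →
      (Summable fun k => |c k| * q ^ k) ∧ |∑' k, c k * q ^ k - 1| ≤ K * q ^ 2 := by
  have hs2 : Summable fun k => |c (k + 2)| * z ^ k := by
    refine (((summable_nat_add_iff 2).2 hs).mul_left ((z ^ 2)⁻¹)).congr fun k => ?_
    rw [pow_add]; field_simp
  refine ⟨∑' k, |c (k + 2)| * z ^ k, tsum_nonneg fun k => by positivity, fun q hq0 hqz => ?_⟩
  have ha : Summable fun k => |c k| * q ^ k :=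
    Summable.of_nonneg_of_le (fun k => by positivity) (fun k => by gcongr) hs
  have ha2 : Summable fun k => |c (k + 2)| * q ^ k :=
    Summable.of_nonneg_of_le (fun k => by positivity) (fun k => by gcongr) hs2
  refine ⟨ha, ?_⟩
  have hn : ∀ k j, ‖c j * q ^ k‖ = |c j| * q ^ k := fun k j => by
    rw [norm_mul, Real.norm_eq_abs, Real.norm_of_nonneg (pow_nonneg hq0 k)]
  have hS : Summable fun k => c k * q ^ k := Summable.of_norm (ha.congr fun k => (hn k k).symm)
  have hS2n : Summable fun k => ‖c (k + 2) * q ^ k‖ := ha2.congr fun k => (hn k _).symm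
  have e := hS.sum_add_tsum_nat_add 2
  have e2 : ∑' k, c (k + 2) * q ^ (k + 2) = q ^ 2 * ∑' k, c (k + 2) * q ^ k := by
    rw [← tsum_mul_left]
    exact tsum_congr fun k => by ring
  rw [e2] at e
  simp only [Finset.sum_range_succ, Finset.sum_range_zero, h0, h1] at e
  have e3 : ∑' k, c k * q ^ k - 1 = q ^ 2 * ∑' k, c (k + 2) * q ^ k := by
    rw [← e]; ring
  rw [e3, abs_mul, abs_of_nonneg (by positivity : (0 : ℝ) ≤ q ^ 2), mul_comm]
  gcongr
  calc |∑' k, c (k + 2) * q ^ k| ≤ ∑' k, ‖c (k + 2) * q ^ k‖ := norm_tsum_le_tsum_norm hS2n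
    _ ≤ ∑' k, |c (k + 2)| * z ^ k := by
      refine Summable.tsum_le_tsum (fun k => ?_) hS2n hs2
      rw [hn]
      gcongr

/-- The local coefficients of `hh`. -/
noncomputable def cc (d k : ℕ) : ℝ := PowerSeries.coeff k (G d ((d + 1) ^ 2))

lemma cc_zero (d : ℕ) : cc d 0 = 1 := G_coeff_zero _ _

lemma cc_one (d : ℕ) : cc d 1 = 0 := by
  rw [cc, G_coeff_one]; push_cast; ring

lemma hh_summable (d : ℕ) : Summable fun n : ℕ => |hh d n| * (n : ℝ) ^ (-(3 / 4) : ℝ) := by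
  set z : ℝ := (2 : ℝ) ^ (-(3 / 4) : ℝ) with hz
  have hz0 : 0 < z := by positivity
  have hz1 : z < 1 := Real.rpow_lt_one_of_one_lt_of_neg (by norm_num) (by norm_num)
  have hs := (G_sum d z hz0.le hz1 ((d + 1) ^ 2)).1
  obtain ⟨K, hK0, hK⟩ := local_bound (fun k => |cc d k|) (by simp [cc_zero]) (by simp [cc_one]) z hz0
    (by simpa only [abs_abs, cc] using hs)
  set f : ℕ → ℝ := fun n : ℕ => |hh d n| * (n : ℝ) ^ (-(3 / 4) : ℝ) with hf
  have hfnn : ∀ n, 0 ≤ f n := fun n => by positivity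
  have hf0 : f 0 = 0 := by simp [hf]
  have hf1 : f 1 = 1 := by simp [hf, (hh_mult d).map_one]
  have hfm : ∀ {m n : ℕ}, Nat.Coprime m n → f (m * n) = f m * f n := by
    intro m n hmn
    simp only [hf]
    rw [(hh_mult d).map_mul_of_coprime hmn, abs_mul, Nat.cast_mul,
      Real.mul_rpow (by positivity) (by positivity)]
    ring
  have hfp : ∀ p : ℕ, p.Prime → ∀ k, f (p ^ k) = |cc d k| * ((p : ℝ) ^ (-(3 / 4) : ℝ)) ^ k := by
    intro p hp k
    simp only [hf]
    rw [hh_pow p hp, cc, Nat.cast_pow, ← Real.rpow_natCast_mul (by positivity), mul_comm (k : ℝ),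
      Real.rpow_mul_natCast (by positivity)]
  have hqz : ∀ p : ℕ, p.Prime → (p : ℝ) ^ (-(3 / 4) : ℝ) ≤ z := by
    intro p hp
    exact Real.rpow_le_rpow_of_nonpos (by norm_num) (by exact_mod_cast hp.two_le) (by norm_num)
  have hsum : ∀ {p : ℕ}, p.Prime → Summable (fun n : ℕ ↦ ‖f (p ^ n)‖) := by
    intro p hp
    refine ((hK _ (by positivity) (hqz p hp)).1).congr fun k => ?_
    rw [Real.norm_of_nonneg (hfnn _), hfp p hp, abs_abs]
  have hE : Summable fun n : ℕ => K * (n : ℝ) ^ (-(3 / 2) : ℝ) :=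
    (Real.summable_nat_rpow.2 (by norm_num)).mul_left K
  refine summable_of_sum_range_le (c := Real.exp (∑' n : ℕ, K * (n : ℝ) ^ (-(3 / 2) : ℝ))) hfnn
    fun n => ?_
  have hp := (EulerProduct.summable_and_hasSum_smoothNumbers_prod_primesBelow_tsum hf1 hfm hsum n).2
  have hp' := (hasSum_subtype_iff_indicator (f := f) (s := n.smoothNumbers)).1 hp
  calc ∑ i ∈ Finset.range n, f i
      = ∑ i ∈ Finset.range n, (n.smoothNumbers).indicator f i := by
        refine Finset.sum_congr rfl fun i hi => ?_
        rcases Nat.eq_zero_or_pos i with rfl | hi0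
        · rw [hf0, Set.indicator]; simp [hf0]
        · rw [Set.indicator_of_mem]
          rw [Nat.mem_smoothNumbers']
          intro p _ hpi
          exact (Nat.le_of_dvd hi0 hpi).trans_lt (Finset.mem_range.1 hi)
    _ ≤ ∏ p ∈ n.primesBelow, ∑' k : ℕ, f (p ^ k) :=
        sum_le_hasSum _ (fun i _ => Set.indicator_nonneg (fun i _ => hfnn i) i) hp'
    _ ≤ ∏ p ∈ n.primesBelow, Real.exp (K * (p : ℝ) ^ (-(3 / 2) : ℝ)) := by
        refine Finset.prod_le_prod (fun p _ => tsum_nonneg fun k => hfnn _) fun p hp => ?_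
        have hpp := Nat.prime_of_mem_primesBelow hp
        have h := (hK _ (by positivity) (hqz p hpp)).2
        have e : ((p : ℝ) ^ (-(3 / 4) : ℝ)) ^ 2 = (p : ℝ) ^ (-(3 / 2) : ℝ) := by
          rw [← Real.rpow_mul_natCast (by positivity)]; norm_num
        rw [e] at h
        have h' := (abs_le.1 h).2
        rw [tsum_congr (hfp p hpp)]
        have := Real.add_one_le_exp (K * (p : ℝ) ^ (-(3 / 2) : ℝ))
        linarith
    _ = Real.exp (∑ p ∈ n.primesBelow, K * (p : ℝ) ^ (-(3 / 2) : ℝ)) := (Real.exp_sum _ _).symm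
    _ ≤ _ := by
        apply Real.exp_le_exp.2
        exact hE.sum_le_tsum _ (fun i _ => by positivity)

lemma weight_summable (d : ℕ) :
    Summable fun n : ℕ => |dv (hh d) n| * (1 + Real.log n) := by
  refine Summable.of_nonneg_of_le (fun n => ?_) (fun n => ?_) ((hh_summable d).mul_left 5)
  · have := Real.log_natCast_nonneg n
    positivity
  · rcases Nat.eq_zero_or_pos n with rfl | hn
    · simp
    have hn' : (1 : ℝ) ≤ n := by exact_mod_cast hn
    have h1 := Real.log_le_rpow_div (x := n) (by positivity) (ε := 1 / 4) (by norm_num)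
    have h2 : 1 ≤ (n : ℝ) ^ (1 / 4 : ℝ) := Real.one_le_rpow hn' (by norm_num)
    have e : (n : ℝ) ^ (-(3 / 4) : ℝ) = (n : ℝ) ^ (1 / 4 : ℝ) / n := by
      rw [← Real.rpow_sub_one (by positivity)]; norm_num
    rw [e, dv_apply, abs_div, Nat.abs_cast]
    have h3 : 1 + Real.log n ≤ 5 * (n : ℝ) ^ (1 / 4 : ℝ) := by
      linarith
    calc |hh d n| / n * (1 + Real.log n) ≤ |hh d n| / n * (5 * (n : ℝ) ^ (1 / 4 : ℝ)) := by gcongr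
      _ = _ := by ring

lemma dv_norm_summable (d : ℕ) : Summable fun n : ℕ => ‖dv (hh d) n‖ := by
  refine Summable.of_nonneg_of_le (fun n => norm_nonneg _) (fun n => ?_) (weight_summable d)
  have := Real.log_natCast_nonneg n
  rw [Real.norm_eq_abs]
  exact le_mul_of_one_le_right (abs_nonneg _) (by linarith)

lemma H_pos (d : ℕ) : 0 < ∑' n : ℕ, dv (hh d) n := by
  have hf1 : dv (hh d) 1 = 1 := by simp [dv_apply, (hh_mult d).map_one]
  have hfm : ∀ {m n : ℕ}, Nat.Coprime m n → dv (hh d) (m * n) = dv (hh d) m * dv (hh d) n := by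
    intro m n hmn
    rw [dv_apply, dv_apply, dv_apply, (hh_mult d).map_mul_of_coprime hmn, Nat.cast_mul,
      mul_div_mul_comm]
  have hP := EulerProduct.eulerProduct_tprod hf1 hfm (dv_norm_summable d) (by simp)
  have hs := fun z h0 h1 => G_sum d z h0 h1 ((d + 1) ^ 2)
  obtain ⟨K, hK0, hK⟩ := local_bound (cc d) (cc_zero d) (cc_one d) (1 / 2) (by norm_num)
    (hs (1 / 2) (by norm_num) (by norm_num)).1
  have hfp : ∀ p : ℕ, p.Prime → ∀ k, dv (hh d) (p ^ k) = cc d k * (1 / (p : ℝ)) ^ k := by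
    intro p hp k
    rw [dv_apply, hh_pow p hp, cc, Nat.cast_pow, one_div, inv_pow, div_eq_mul_inv]
  have hq : ∀ p : Nat.Primes, 1 / ((p : ℕ) : ℝ) ≤ 1 / 2 := by
    intro p
    have : (2 : ℝ) ≤ (p : ℕ) := by exact_mod_cast p.2.two_le
    gcongr
  have hpos : ∀ p : Nat.Primes, 0 < ∑' e : ℕ, dv (hh d) ((p : ℕ) ^ e) := by
    intro p
    rw [tsum_congr (hfp p p.2)]
    exact (hs _ (by positivity) ((hq p).trans_lt (by norm_num))).2
  have hsa : Summable fun p : Nat.Primes => ∑' e : ℕ, dv (hh d) ((p : ℕ) ^ e) - 1 := by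
    have hE : Summable fun n : ℕ => K * (1 / (n : ℝ)) ^ 2 := by
      refine ((Real.summable_one_div_nat_pow (p := 2)).2 (by norm_num)).mul_left K |>.congr
        fun n => ?_
      rw [one_div_pow]
    have hE' := hE.comp_injective (i := fun p : Nat.Primes => (p : ℕ)) Subtype.val_injective
    refine Summable.of_norm_bounded hE' fun p => ?_
    rw [tsum_congr (hfp p p.2), Real.norm_eq_abs]
    exact (hK _ (by positivity) (hq p)).2
  have hl := Real.summable_log_one_add_of_summable hsa
  simp only [add_sub_cancel] at hl
  rw [← hP, ← Real.rexp_tsum_eq_tprod hpos hl]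
  exact Real.exp_pos _

/-- Comparison of the shifted sum with the main term. -/
lemma F_bound (N : ℕ) : ∃ C : ℝ, 0 ≤ C ∧ ∀ x : ℝ, 2 ≤ x → ∀ m : ℕ, 0 < m →
    |D (zR ^ (N + 1)) (⌊x⌋₊ / m) - (Real.log x) ^ (N + 1) / (N + 1).factorial|
      ≤ C * (1 + Real.log m) * (Real.log x) ^ N := by
  set B : ℝ := 1 + (N + 1) / Real.log 2 with hB
  have hl2 : 0 < Real.log 2 := Real.log_pos (by norm_num)
  have hB1 : 1 ≤ B := by rw [hB]; have : 0 ≤ ((N : ℝ) + 1) / Real.log 2 := by positivity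
                         linarith
  refine ⟨(N + 1) + (N + 1) * (N + 1) * B ^ N, by positivity, fun x hx m hm => ?_⟩
  set l := Real.log x with hl
  have hlx : Real.log 2 ≤ l := Real.log_le_log (by norm_num) hx
  have hl0 : 0 < l := by linarith
  have hlm : 0 ≤ Real.log m := Real.log_natCast_nonneg m
  have hm0 : (0 : ℝ) < m := by exact_mod_cast hm
  have hfac : (1 : ℝ) ≤ (N + 1).factorial := by exact_mod_cast Nat.succ_le_of_lt (Nat.factorial_pos _)
  have hBN : 0 ≤ ((N : ℝ) + 1) * (N + 1) * B ^ N := by positivity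
  have hlN : 0 ≤ l ^ N := by positivity
  have hle1 : ∀ t : ℝ, 0 ≤ t → t / (N + 1).factorial ≤ t := fun t ht => div_le_self ht hfac
  by_cases hmx : (m : ℝ) ≤ x
  · have h1 : 1 ≤ x / m := by rw [le_div_iff₀ hm0]; linarith
    have hb := D_zeta_bounds (N + 1) (x / m) h1
    rw [Nat.floor_div_natCast, Real.log_div (by linarith) hm0.ne', ← hl] at hb
    obtain ⟨hb1, hb2⟩ := hb
    have hal : Real.log m ≤ l := Real.log_le_log hm0 hmx
    rw [abs_le]
    constructor
    · have h2 := pow_sub_upper l (l - Real.log m) N (by linarith) (by linarith)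
      have h3 : (l ^ (N + 1) - (l - Real.log m) ^ (N + 1)) / (N + 1).factorial
          ≤ (N + 1) * Real.log m * l ^ N := by
        refine (hle1 _ (sub_nonneg.2 (pow_le_pow_left₀ (by linarith) (by linarith) _))).trans ?_
        simpa using h2
      rw [sub_div] at h3
      have h4 : ((N : ℝ) + 1) * Real.log m * l ^ N ≤
          ((N + 1) + (N + 1) * (N + 1) * B ^ N) * (1 + Real.log m) * l ^ N := by
        refine mul_le_mul_of_nonneg_right (mul_le_mul ?_ ?_ hlm (by positivity)) hlN
        · linarith
        · linarith
      linarith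
    · push_cast at hb2
      have h2 := pow_sub_upper (l + (N + 1)) l N hl0.le (by linarith [(Nat.cast_nonneg N : (0:ℝ) ≤ N)])
      have hBl : l + (N + 1) ≤ B * l := by
        have : (N : ℝ) + 1 ≤ (N + 1) / Real.log 2 * l := by
          rw [div_mul_eq_mul_div, le_div_iff₀ hl2]
          gcongr
        rw [hB]; linarith
      have h3 : ((l + (N + 1)) ^ (N + 1) - l ^ (N + 1)) / (N + 1).factorial
          ≤ (N + 1) * (N + 1) * B ^ N * l ^ N := by
        refine (hle1 _ (sub_nonneg.2 (pow_le_pow_left₀ hl0.le (by linarith [(Nat.cast_nonneg N : (0:ℝ) ≤ N)]) _))).trans ?_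
        refine h2.trans ?_
        rw [add_sub_cancel_left, mul_assoc _ (B ^ N), ← mul_pow]
        gcongr
      rw [sub_div] at h3
      have h5 : (l - Real.log m + (N + 1)) ^ (N + 1) / (N + 1).factorial
          ≤ (l + (N + 1)) ^ (N + 1) / (N + 1).factorial := by
        gcongr
        linarith
      have h4 : ((N : ℝ) + 1) * (N + 1) * B ^ N * l ^ N ≤
          ((N + 1) + (N + 1) * (N + 1) * B ^ N) * (1 + Real.log m) * l ^ N := by
        refine mul_le_mul_of_nonneg_right ?_ hlN
        calc ((N : ℝ) + 1) * (N + 1) * B ^ N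
            ≤ ((N + 1) + (N + 1) * (N + 1) * B ^ N) * 1 := by linarith [(Nat.cast_nonneg N : (0:ℝ) ≤ N)]
          _ ≤ _ := mul_le_mul_of_nonneg_left (by linarith) (by positivity)
      linarith
  · push Not at hmx
    have h0 : ⌊x⌋₊ / m = 0 := Nat.div_eq_of_lt ((Nat.floor_lt (by linarith)).2 hmx)
    have hD : D (zR ^ (N + 1)) (⌊x⌋₊ / m) = 0 := by rw [h0]; simp [D]
    rw [hD, zero_sub, abs_neg, abs_of_nonneg (by positivity)]
    have hal : l ≤ Real.log m := Real.log_le_log (by linarith) hmx.le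
    calc l ^ (N + 1) / (N + 1).factorial ≤ l ^ (N + 1) := hle1 _ (by positivity)
      _ = 1 * l * l ^ N := by ring
      _ ≤ _ := by
        gcongr
        · linarith [(Nat.cast_nonneg N : (0:ℝ) ≤ N)]
        · linarith

lemma sq_apply (d n : ℕ) : ((dFold (d + 1) n : ℕ) : ℝ) ^ 2 = sq d n := by
  have h : ∀ r, ((ArithmeticFunction.zeta ^ r : ArithmeticFunction ℕ) : ArithmeticFunction ℝ)
      = zR ^ r := by
    intro r
    induction r with
    | zero => simp
    | succ r ih => rw [pow_succ, pow_succ, ArithmeticFunction.natCoe_mul, ih]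
  rw [sq, ArithmeticFunction.pmul_apply, ← h, ArithmeticFunction.natCoe_apply, dFold, _root_.sq]

end DFoldAux

open DFoldAux in
theorem dFold_sq_average (r : ℕ) (hr : 1 ≤ r) :
    ∃ A : ℝ, 0 < A ∧ ∃ C : ℝ, ∀ T x : ℝ, 2 ≤ x → x ≤ T →
      |(∑ k ∈ Finset.Icc 1 ⌊x⌋₊, (dFold r k : ℝ) ^ 2 / k) - A * (Real.log x) ^ (r ^ 2)|
        ≤ C * (Real.log T) ^ (r ^ 2 - 1) := by
  obtain ⟨d, rfl⟩ : ∃ d, r = d + 1 := ⟨r - 1, by omega⟩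
  obtain ⟨N, hN⟩ : ∃ N, (d + 1) ^ 2 = N + 1 := ⟨(d + 1) ^ 2 - 1, by
    have : 0 < (d + 1) ^ 2 := by positivity
    omega⟩
  obtain ⟨C, hC0, hC⟩ := F_bound N
  have hfac : (0 : ℝ) < (N + 1).factorial := by exact_mod_cast Nat.factorial_pos _
  refine ⟨(∑' n : ℕ, dv (hh d) n) / (N + 1).factorial, div_pos (H_pos d) hfac,
    C * ∑' n : ℕ, |dv (hh d) n| * (1 + Real.log n), fun T x hx hxT => ?_⟩
  have hW := weight_summable d
  have hl0 : 0 < Real.log x := Real.log_pos (by linarith)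
  have hW0 : 0 ≤ ∑' n : ℕ, |dv (hh d) n| * (1 + Real.log n) := tsum_nonneg fun n => by
    have := Real.log_natCast_nonneg n
    positivity
  rw [hN, Nat.add_sub_cancel]
  have e1 : ∑ k ∈ Finset.Icc 1 ⌊x⌋₊, (dFold (d + 1) k : ℝ) ^ 2 / k = D (sq d) ⌊x⌋₊ := by
    unfold D
    refine Finset.sum_congr (by ext; simp [Nat.succ_le_iff]) fun k _ => ?_
    rw [sq_apply, dv_apply]
  have hDz : D (zR ^ (N + 1)) 0 = 0 := by simp [D]
  have e2 : HasSum (fun m : ℕ => dv (hh d) m * D (zR ^ (N + 1)) (⌊x⌋₊ / m)) (D (sq d) ⌊x⌋₊) := by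
    rw [sq_eq, D_mul, hN]
    refine hasSum_sum_of_ne_finset_zero fun m hm => ?_
    rw [Finset.mem_Ioc, not_and_or] at hm
    rcases hm with hm | hm
    · have : m = 0 := by omega
      simp [this]
    · rw [Nat.div_eq_of_lt (by omega), hDz, mul_zero]
  have hS : Summable fun n : ℕ => dv (hh d) n := (dv_norm_summable d).of_norm
  have e3 := hS.hasSum.mul_right ((Real.log x) ^ (N + 1) / (N + 1).factorial)
  have e4 := e2.sub e3
  have hb : ∀ m : ℕ, ‖dv (hh d) m * D (zR ^ (N + 1)) (⌊x⌋₊ / m)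
      - dv (hh d) m * ((Real.log x) ^ (N + 1) / (N + 1).factorial)‖
      ≤ (C * (Real.log x) ^ N) * (|dv (hh d) m| * (1 + Real.log m)) := by
    intro m
    rcases Nat.eq_zero_or_pos m with rfl | hm
    · simp
    rw [← mul_sub, norm_mul, Real.norm_eq_abs, Real.norm_eq_abs]
    calc _ ≤ |dv (hh d) m| * (C * (1 + Real.log m) * (Real.log x) ^ N) := by
          gcongr
          exact hC x hx m hm
      _ = _ := by ring
  have e5 := tsum_of_norm_bounded (hW.hasSum.mul_left (C * (Real.log x) ^ N)) hb
  rw [e4.tsum_eq, Real.norm_eq_abs] at e5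
  rw [e1]
  have e6 : (∑' n : ℕ, dv (hh d) n) / (N + 1).factorial * Real.log x ^ (N + 1)
      = (∑' n : ℕ, dv (hh d) n) * (Real.log x ^ (N + 1) / (N + 1).factorial) := by ring
  rw [e6]
  refine e5.trans ?_
  have hlT : Real.log x ≤ Real.log T := Real.log_le_log (by linarith) hxT
  calc _ = C * (∑' n : ℕ, |dv (hh d) n| * (1 + Real.log n)) * Real.log x ^ N := by ring
    _ ≤ _ := by gcongr
end

section
/- Let r ≥ 1 be an integer, f_1 a real polynomial, K = T(log T)^{-2}, and A_r the constant with ∑_{k≤x} d_r(k)²/k = A_r(log x)^{r²} + O((log T)^{r²−1}). Then for c > 0 fixed and every ε > 0, (2/π) ∑_{nk ≤ K} (d_r(k) d_r(nk) Λ(n))/(k n log n) · sin(πc (log n)/log T) · f_1((log(K/k))/log K) f_1((log(K/nk))/log K) = (2 A_r r³/π)(log T)^{r²} ∫_0^1 (1−u)^{r²−1} f_1(u) ∫_0^u (sin(πcv)/v) f_1(u−v) dv du + O((log T)^{r²−1+ε}) as T → ∞. -/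
open ArithmeticFunction Finset Real

/-- `K = T (log T)^{-2}`. -/
noncomputable def Kof (T : ℝ) : ℝ := T * (Real.log T) ^ (-2 : ℤ)

/-! ### Divisor function -/

theorem dFold_succ (r n : ℕ) : dFold (r + 1) n = ∑ d ∈ n.divisors, dFold r d := by
  unfold dFold
  rw [pow_succ, ArithmeticFunction.mul_zeta_apply]

theorem dFold_one (r : ℕ) : dFold r 1 = 1 := by
  induction r with
  | zero => simp [dFold]
  | succ r ih => rw [dFold_succ]; simp [ih]

theorem dFold_prime (r p : ℕ) (hp : p.Prime) : dFold r p = r := by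
  induction r with
  | zero => simp [dFold, hp.ne_one]
  | succ r ih =>
    rw [dFold_succ, Nat.Prime.sum_divisors hp, ih, dFold_one]

theorem dFold_prime_pow_le (r p a : ℕ) (hp : p.Prime) : dFold r (p ^ a) ≤ (a + 1) ^ r := by
  induction r generalizing a with
  | zero =>
    simp only [dFold, pow_zero, ArithmeticFunction.one_apply]
    split_ifs <;> simp
  | succ r ih =>
    rw [dFold_succ, Nat.sum_divisors_prime_pow hp]
    calc ∑ k ∈ Finset.range (a + 1), dFold r (p ^ k) ≤ ∑ k ∈ Finset.range (a + 1), (a + 1) ^ r := by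
          apply Finset.sum_le_sum
          intro i hi
          refine (ih i).trans (Nat.pow_le_pow_left ?_ r)
          have := Finset.mem_range.1 hi
          omega
      _ = (a + 1) ^ (r + 1) := by simp [pow_succ, mul_comm]

theorem dFold_submul (r m n : ℕ) : dFold r (m * n) ≤ dFold r m * dFold r n := by
  induction r generalizing m n with
  | zero =>
    simp only [dFold, pow_zero, ArithmeticFunction.one_apply, mul_eq_one]
    split_ifs <;> simp_all
  | succ r ih =>
    rw [dFold_succ, dFold_succ, dFold_succ, Finset.sum_mul_sum, ← Finset.sum_product']
    have him : (m * n).divisors = (m.divisors ×ˢ n.divisors).image (fun x => x.1 * x.2) := by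
      rw [Nat.divisors_mul]; rfl
    rw [him]
    refine (Finset.sum_image_le_of_nonneg (fun _ _ => Nat.zero_le _)).trans ?_
    exact Finset.sum_le_sum fun x _ => ih x.1 x.2

theorem dFold_coprime_mul (r m n : ℕ) (h : m.Coprime n) :
    dFold r (m * n) = dFold r m * dFold r n :=
  (ArithmeticFunction.isMultiplicative_zeta.pow (k := r)).map_mul_of_coprime h

/-! ### Mertens -/

theorem sum_log_eq (N : ℕ) :
    Real.log (N.factorial) = ∑ n ∈ Finset.Ioc 0 N, Λ n * ((N / n : ℕ) : ℝ) := by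
  rw [← ArithmeticFunction.sum_Ioc_mul_zeta_eq_sum, vonMangoldt_mul_zeta]
  induction N with
  | zero => simp
  | succ N ih =>
    rw [← Finset.insert_Ioc_right_eq_Ioc_add_one (by omega), Finset.sum_insert (by simp), ← ih,
      Nat.factorial_succ]
    push_cast
    rw [Real.log_mul (by positivity) (by positivity)]
    simp [ArithmeticFunction.log_apply]

theorem mertens_first (N : ℕ) (hN : 1 ≤ N) :
    |∑ n ∈ Finset.Icc 1 N, Λ n / n - Real.log N| ≤ Real.log 4 + 5 := by
  have hN0 : (0 : ℝ) < N := by exact_mod_cast hN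
  have hI : Finset.Icc 1 N = Finset.Ioc 0 N := by ext; simp; omega
  rw [hI]
  have h1 := sum_log_eq N
  have hup : Real.log (N.factorial) ≤ N * Real.log N := by
    rw [← Real.log_pow]
    apply Real.log_le_log (by positivity)
    exact_mod_cast Nat.factorial_le_pow N
  have hlow : N * Real.log N - N ≤ Real.log (N.factorial) := by
    have := Stirling.le_log_factorial_stirling (n := N) (by omega)
    have h2 : 0 ≤ Real.log N := Real.log_natCast_nonneg N
    have h3 : 0 ≤ Real.log (2 * π) := Real.log_nonneg (by nlinarith [Real.pi_gt_three])
    linarith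
  have hpsi : ∑ n ∈ Finset.Ioc 0 N, Λ n ≤ (Real.log 4 + 4) * N := by
    have := Chebyshev.psi_le_const_mul_self (x := N) hN0.le
    simpa [Chebyshev.psi] using this
  have ha : ∑ n ∈ Finset.Ioc 0 N, Λ n * ((N / n : ℕ) : ℝ) ≤ N * ∑ n ∈ Finset.Ioc 0 N, Λ n / n := by
    rw [Finset.mul_sum]
    apply Finset.sum_le_sum
    intro n hn
    have : ((N / n : ℕ) : ℝ) ≤ N / n := Nat.cast_div_le
    calc Λ n * ((N / n : ℕ) : ℝ) ≤ Λ n * (N / n) :=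
          mul_le_mul_of_nonneg_left this vonMangoldt_nonneg
      _ = _ := by ring
  have hb : N * ∑ n ∈ Finset.Ioc 0 N, Λ n / n ≤
      ∑ n ∈ Finset.Ioc 0 N, Λ n * ((N / n : ℕ) : ℝ) + ∑ n ∈ Finset.Ioc 0 N, Λ n := by
    rw [Finset.mul_sum, ← Finset.sum_add_distrib]
    apply Finset.sum_le_sum
    intro n hn
    have hn0 : 0 < n := (Finset.mem_Ioc.1 hn).1
    have : (N : ℝ) / n ≤ ((N / n : ℕ) : ℝ) + 1 := by
      rw [div_le_iff₀ (by exact_mod_cast hn0)]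
      have := Nat.lt_div_mul_add (a := N) hn0
      have h' : N ≤ (N / n + 1) * n := by rw [add_mul]; omega
      exact_mod_cast h'
    calc N * (Λ n / n) = Λ n * (N / n) := by ring
      _ ≤ Λ n * (((N / n : ℕ) : ℝ) + 1) := mul_le_mul_of_nonneg_left this vonMangoldt_nonneg
      _ = _ := by ring
  have h4 : 0 ≤ Real.log 4 := Real.log_nonneg (by norm_num)
  rw [abs_le]
  constructor
  · have : (N : ℝ) * (-1) ≤ N * (∑ n ∈ Finset.Ioc 0 N, Λ n / n - Real.log N) := by
      rw [mul_sub]; linarith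
    have := le_of_mul_le_mul_left this hN0
    linarith
  · have : N * (∑ n ∈ Finset.Ioc 0 N, Λ n / n - Real.log N) ≤ N * (Real.log 4 + 4) := by
      rw [mul_sub]; linarith
    have := le_of_mul_le_mul_left this hN0
    linarith

/-! ### Partial summation -/

theorem log_succ_sub_le (j : ℕ) (hj : 1 ≤ j) :
    0 ≤ Real.log ((j + 1 : ℕ) : ℝ) - Real.log j ∧
      Real.log ((j + 1 : ℕ) : ℝ) - Real.log j ≤ 1 := by
  have hj0 : (0 : ℝ) < j := by exact_mod_cast hj
  have hj1 : (1 : ℝ) ≤ j := by exact_mod_cast hj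
  constructor
  · rw [sub_nonneg]
    exact Real.log_le_log hj0 (by push_cast; linarith)
  · rw [← Real.log_div (by positivity) (by positivity)]
    have h1 : (((j + 1 : ℕ) : ℝ) / j) ≤ 2 := by
      rw [div_le_iff₀ hj0]; push_cast; linarith
    have := Real.log_le_sub_one_of_pos (x := ((j + 1 : ℕ) : ℝ) / j) (by positivity)
    linarith

theorem contOn_of_lip (h : ℝ → ℝ) (Y L : ℝ)
    (hL : ∀ x ∈ Set.Icc 0 Y, ∀ y ∈ Set.Icc 0 Y, |h x - h y| ≤ L * |x - y|) :
    ContinuousOn h (Set.Icc 0 Y) := by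
  have : LipschitzOnWith (Real.toNNReal L) h (Set.Icc 0 Y) := by
    apply LipschitzOnWith.of_dist_le_mul
    intro x hx y hy
    rw [Real.dist_eq, Real.dist_eq]
    refine (hL x hx y hy).trans ?_
    exact mul_le_mul_of_nonneg_right (Real.le_coe_toNNReal L) (abs_nonneg _)
  exact this.continuousOn

theorem abel_aux (a : ℕ → ℝ) (m m' h : ℝ → ℝ) (Y E B L : ℝ) (hL0 : 0 ≤ L)
    (hB0 : 0 ≤ B)
    (hm : ∀ s, HasDerivAt m (m' s) s) (hm' : Continuous m') (hm0 : m 0 = 0)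
    (hB : ∀ s ∈ Set.Icc 0 Y, |m' s| ≤ B)
    (hL : ∀ x ∈ Set.Icc 0 Y, ∀ y ∈ Set.Icc 0 Y, |h x - h y| ≤ L * |x - y|)
    (hE : ∀ j : ℕ, 1 ≤ j → Real.log j ≤ Y →
      |∑ n ∈ Finset.Icc 1 j, a n - m (Real.log j)| ≤ E)
    (j : ℕ) (hj : 1 ≤ j) (hjY : Real.log j ≤ Y) :
    |∑ n ∈ Finset.Icc 1 j, a n * h (Real.log n) - (∫ s in (0 : ℝ)..(Real.log j), m' s * h s)
      - (∑ n ∈ Finset.Icc 1 j, a n - m (Real.log j)) * h (Real.log j)|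
      ≤ (E + B) * L * Real.log j := by
  have hcont := contOn_of_lip h Y L hL
  induction j, hj using Nat.le_induction with
  | base => simp [hm0]
  | succ j hj ih =>
    obtain ⟨hd0, hd1⟩ := log_succ_sub_le j hj
    have hjY' : Real.log j ≤ Y := by linarith
    have ih := ih hjY'
    have hlj : 0 ≤ Real.log j := Real.log_natCast_nonneg j
    set x := Real.log j with hx
    set y := Real.log ((j + 1 : ℕ) : ℝ) with hy
    have hxm : x ∈ Set.Icc 0 Y := ⟨hlj, hjY'⟩
    have hym : y ∈ Set.Icc 0 Y := ⟨by linarith, hjY⟩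
    have hEj := hE j hj hjY'
    have hsub : Set.uIcc x y ⊆ Set.Icc 0 Y := by
      rw [Set.uIcc_of_le (by linarith)]
      exact Set.Icc_subset_Icc hlj hjY
    have hsub0 : Set.uIcc 0 x ⊆ Set.Icc 0 Y := by
      rw [Set.uIcc_of_le hlj]
      exact Set.Icc_subset_Icc le_rfl hjY'
    have hint : IntervalIntegrable (fun s => m' s * h s) MeasureTheory.volume x y :=
      ((hm'.continuousOn).mul (hcont.mono hsub)).intervalIntegrable
    have hint0 : IntervalIntegrable (fun s => m' s * h s) MeasureTheory.volume 0 x :=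
      ((hm'.continuousOn).mul (hcont.mono hsub0)).intervalIntegrable
    have hftc : ∫ s in x..y, m' s = m y - m x :=
      intervalIntegral.integral_eq_sub_of_hasDerivAt (fun s _ => hm s) (hm'.intervalIntegrable _ _)
    have hsplit : (∫ s in (0 : ℝ)..y, m' s * h s) =
        (∫ s in (0 : ℝ)..x, m' s * h s) + ∫ s in x..y, m' s * h s :=
      (intervalIntegral.integral_add_adjacent_intervals hint0 hint).symm
    have hdiff : (∫ s in x..y, m' s * (h y - h s)) =
        (m y - m x) * h y - ∫ s in x..y, m' s * h s := by
      rw [← hftc, ← intervalIntegral.integral_mul_const, ← intervalIntegral.integral_sub _ hint]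
      · congr 1; ext s; ring
      · exact (hm'.mul continuous_const).intervalIntegrable _ _
    have hbd : |∫ s in x..y, m' s * (h y - h s)| ≤ (B * L) * (y - x) := by
      have := intervalIntegral.norm_integral_le_of_norm_le_const (a := x) (b := y)
        (f := fun s => m' s * (h y - h s)) (C := B * L) ?_
      · rwa [Real.norm_eq_abs, abs_of_nonneg hd0] at this
      · intro s hs
        rw [Set.uIoc_of_le (by linarith)] at hs
        have hsm : s ∈ Set.Icc 0 Y := ⟨by linarith [hs.1], by linarith [hs.2]⟩
        rw [Real.norm_eq_abs, abs_mul]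
        apply mul_le_mul (hB s hsm) _ (abs_nonneg _) hB0
        refine (hL y hym s hsm).trans ?_
        have : |y - s| ≤ 1 := by
          rw [abs_of_nonneg (by linarith [hs.2])]; linarith [hs.1]
        nlinarith
    have hbd2 : |(∑ n ∈ Finset.Icc 1 j, a n - m x) * (h x - h y)| ≤ E * L * (y - x) := by
      rw [abs_mul, mul_assoc]
      apply mul_le_mul hEj _ (abs_nonneg _) ((abs_nonneg _).trans hEj)
      refine (hL x hxm y hym).trans ?_
      rw [abs_sub_comm, abs_of_nonneg hd0]
    rw [Finset.sum_Icc_succ_top (by omega), Finset.sum_Icc_succ_top (by omega), hsplit]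
    rw [← hy]
    have key : ∑ n ∈ Finset.Icc 1 j, a n * h (Real.log n) + a (j + 1) * h y -
        ((∫ s in (0 : ℝ)..x, m' s * h s) + ∫ s in x..y, m' s * h s) -
        (∑ n ∈ Finset.Icc 1 j, a n + a (j + 1) - m y) * h y =
        (∑ n ∈ Finset.Icc 1 j, a n * h (Real.log n) - (∫ s in (0 : ℝ)..x, m' s * h s)
          - (∑ n ∈ Finset.Icc 1 j, a n - m x) * h x)
        + (∑ n ∈ Finset.Icc 1 j, a n - m x) * (h x - h y)
        + ∫ s in x..y, m' s * (h y - h s) := by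
      rw [hdiff]; ring
    rw [key]
    refine (abs_add_three _ _ _).trans ?_
    nlinarith

theorem abel_compare (a : ℕ → ℝ) (m m' h : ℝ → ℝ) (Y E B H L : ℝ) (hY : 0 ≤ Y) (hL0 : 0 ≤ L)
    (hB0 : 0 ≤ B)
    (hm : ∀ s, HasDerivAt m (m' s) s) (hm' : Continuous m') (hm0 : m 0 = 0)
    (hB : ∀ s ∈ Set.Icc 0 Y, |m' s| ≤ B)
    (hH : ∀ s ∈ Set.Icc 0 Y, |h s| ≤ H)
    (hL : ∀ x ∈ Set.Icc 0 Y, ∀ y ∈ Set.Icc 0 Y, |h x - h y| ≤ L * |x - y|)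
    (hE : ∀ j : ℕ, 1 ≤ j → Real.log j ≤ Y →
      |∑ n ∈ Finset.Icc 1 j, a n - m (Real.log j)| ≤ E) :
    |∑ n ∈ Finset.Icc 1 ⌊Real.exp Y⌋₊, a n * h (Real.log n) - ∫ s in (0 : ℝ)..Y, m' s * h s|
      ≤ (E + B) * (H + L * Y) := by
  set N := ⌊Real.exp Y⌋₊ with hN
  have hN1 : 1 ≤ N := Nat.le_floor (by simpa using hY)
  have hNr : (1 : ℝ) ≤ N := by exact_mod_cast hN1
  have hNY : Real.log N ≤ Y := by
    rw [Real.log_le_iff_le_exp (by linarith)]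
    exact Nat.floor_le (Real.exp_pos Y).le
  have hlN : 0 ≤ Real.log N := Real.log_natCast_nonneg N
  have hYN : Y ≤ Real.log ((N + 1 : ℕ) : ℝ) := by
    rw [Real.le_log_iff_exp_le (by positivity)]
    push_cast
    exact (Nat.lt_floor_add_one _).le
  have hgap : Y - Real.log N ≤ 1 := by linarith [(log_succ_sub_le N hN1).2]
  have h1 := abel_aux a m m' h Y E B L hL0 hB0 hm hm' hm0 hB hL hE N hN1 hNY
  have h2 := hE N hN1 hNY
  have hE0 : 0 ≤ E := (abs_nonneg _).trans h2
  have hmN : Real.log N ∈ Set.Icc 0 Y := ⟨hlN, hNY⟩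
  have hH0 : 0 ≤ H := (abs_nonneg _).trans (hH _ hmN)
  have hcont := contOn_of_lip h Y L hL
  have hint : IntervalIntegrable (fun s => m' s * h s) MeasureTheory.volume 0 (Real.log N) := by
    apply ContinuousOn.intervalIntegrable
    apply (hm'.continuousOn).mul (hcont.mono _)
    rw [Set.uIcc_of_le hlN]
    exact Set.Icc_subset_Icc le_rfl hNY
  have hint2 : IntervalIntegrable (fun s => m' s * h s) MeasureTheory.volume (Real.log N) Y := by
    apply ContinuousOn.intervalIntegrable
    apply (hm'.continuousOn).mul (hcont.mono _)
    rw [Set.uIcc_of_le hNY]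
    exact Set.Icc_subset_Icc hlN le_rfl
  have hsplit := intervalIntegral.integral_add_adjacent_intervals hint hint2
  have htail : |∫ s in (Real.log N)..Y, m' s * h s| ≤ B * H := by
    have := intervalIntegral.norm_integral_le_of_norm_le_const (a := Real.log N) (b := Y)
        (f := fun s => m' s * h s) (C := B * H) ?_
    · rw [Real.norm_eq_abs, abs_of_nonneg (sub_nonneg.2 hNY)] at this
      have : B * H * (Y - Real.log N) ≤ B * H * 1 :=
        mul_le_mul_of_nonneg_left hgap (by positivity)
      linarith
    · intro s hs
      rw [Set.uIoc_of_le hNY] at hs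
      have hsm : s ∈ Set.Icc 0 Y := ⟨by linarith [hs.1], hs.2⟩
      rw [Real.norm_eq_abs, abs_mul]
      exact mul_le_mul (hB s hsm) (hH s hsm) (abs_nonneg _) hB0
  have h3 : |(∑ n ∈ Finset.Icc 1 N, a n - m (Real.log N)) * h (Real.log N)| ≤ E * H := by
    rw [abs_mul]
    exact mul_le_mul h2 (hH _ hmN) (abs_nonneg _) hE0
  rw [← hsplit]
  have key : ∑ n ∈ Finset.Icc 1 N, a n * h (Real.log n) -
      ((∫ s in (0 : ℝ)..(Real.log N), m' s * h s) + ∫ s in (Real.log N)..Y, m' s * h s) =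
      (∑ n ∈ Finset.Icc 1 N, a n * h (Real.log n) - (∫ s in (0 : ℝ)..(Real.log N), m' s * h s)
      - (∑ n ∈ Finset.Icc 1 N, a n - m (Real.log N)) * h (Real.log N))
      + (∑ n ∈ Finset.Icc 1 N, a n - m (Real.log N)) * h (Real.log N)
      + (-(∫ s in (Real.log N)..Y, m' s * h s)) := by ring
  rw [key]
  refine (abs_add_three _ _ _).trans ?_
  rw [abs_neg]
  have h5 : (E + B) * L * Real.log N ≤ (E + B) * L * Y :=
    mul_le_mul_of_nonneg_left hNY (by positivity)
  nlinarith

/-! ### Arithmetic error terms -/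

theorem dFold_primePow_rpow (r : ℕ) : ∃ C : ℝ, 0 ≤ C ∧ ∀ n : ℕ, IsPrimePow n →
    (dFold r n : ℝ) + r ≤ C * (n : ℝ) ^ (1 / 8 : ℝ) := by
  set b : ℝ := (2 : ℝ) ^ (1 / 8 : ℝ) with hb
  have hb1 : 1 < b := Real.one_lt_rpow (by norm_num) (by norm_num)
  have hb0 : 0 < b := by linarith
  obtain ⟨M, hM⟩ := (tendsto_pow_const_div_const_pow_of_one_lt r hb1).bddAbove_range
  have hM' : ∀ n : ℕ, (n : ℝ) ^ r ≤ M * b ^ n := by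
    intro n
    have := hM ⟨n, rfl⟩
    simp only at this
    rwa [div_le_iff₀ (by positivity)] at this
  have hM0 : 0 ≤ M := by
    have := hM' 1
    simp only [Nat.cast_one, one_pow, pow_one] at this
    by_contra hneg
    push Not at hneg
    nlinarith
  refine ⟨M * b + r, by positivity, ?_⟩
  intro n hn
  rw [isPrimePow_nat_iff] at hn
  obtain ⟨p, a, hp, ha, rfl⟩ := hn
  have hp2 : (2 : ℝ) ≤ p := by exact_mod_cast hp.two_le
  have hpow : b ^ a ≤ ((p ^ a : ℕ) : ℝ) ^ (1 / 8 : ℝ) := by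
    push_cast
    rw [← Real.rpow_natCast (p : ℝ) a, ← Real.rpow_mul (by positivity), mul_comm,
      Real.rpow_mul (by positivity), Real.rpow_natCast]
    apply pow_le_pow_left₀ hb0.le
    exact Real.rpow_le_rpow (by norm_num) hp2 (by norm_num)
  have h1 : (1 : ℝ) ≤ ((p ^ a : ℕ) : ℝ) ^ (1 / 8 : ℝ) := by
    refine le_trans ?_ hpow
    exact one_le_pow₀ hb1.le
  have h2 : (dFold r (p ^ a) : ℝ) ≤ ((a + 1 : ℕ) : ℝ) ^ r := by
    exact_mod_cast dFold_prime_pow_le r p a hp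
  have h3 := hM' (a + 1)
  have h4 : M * b ^ (a + 1) = M * b * b ^ a := by ring
  have h5 : M * b * b ^ a ≤ M * b * ((p ^ a : ℕ) : ℝ) ^ (1 / 8 : ℝ) :=
    mul_le_mul_of_nonneg_left hpow (by positivity)
  have h6 : (r : ℝ) ≤ r * ((p ^ a : ℕ) : ℝ) ^ (1 / 8 : ℝ) :=
    le_mul_of_one_le_right (by positivity) h1
  rw [add_mul]
  linarith

theorem sum_rpow_bdd (s : ℝ) (hs : 1 < s) : ∃ C : ℝ, 0 ≤ C ∧ ∀ N : ℕ,
    ∑ n ∈ Finset.Icc 1 N, (n : ℝ) ^ (-s) ≤ C := by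
  have hsum : Summable (fun n : ℕ => (n : ℝ) ^ (-s)) := Real.summable_nat_rpow.2 (by linarith)
  refine ⟨∑' n : ℕ, (n : ℝ) ^ (-s), tsum_nonneg fun n => by positivity, fun N => ?_⟩
  exact hsum.sum_le_tsum _ (fun n _ => by positivity)

theorem sum_primePow_bdd : ∃ C : ℝ, 0 ≤ C ∧ ∀ N : ℕ,
    ∑ n ∈ (Finset.Icc 2 N).filter (fun n => IsPrimePow n ∧ ¬ n.Prime),
      (n : ℝ) ^ (-(3 / 4) : ℝ) ≤ C := by
  obtain ⟨C1, hC1, h1⟩ := sum_rpow_bdd (3 / 2) (by norm_num)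
  obtain ⟨C2, hC2, h2⟩ := sum_rpow_bdd (9 / 4) (by norm_num)
  refine ⟨C1 * C2, by positivity, fun N => ?_⟩
  have hsub : (Finset.Icc 2 N).filter (fun n => IsPrimePow n ∧ ¬ n.Prime) ⊆
      ((Finset.Icc 1 N) ×ˢ (Finset.Icc 1 N)).image (fun x : ℕ × ℕ => x.1 ^ 2 * x.2 ^ 3) := by
    intro n hn
    rw [Finset.mem_filter, Finset.mem_Icc] at hn
    obtain ⟨⟨hn2, hnN⟩, hpp, hnp⟩ := hn
    rw [isPrimePow_nat_iff] at hpp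
    obtain ⟨p, a, hp, ha, rfl⟩ := hpp
    have ha2 : 2 ≤ a := by
      by_contra hlt
      have : a = 1 := by omega
      subst this
      simp [hp] at hnp
    have hp1 : 1 ≤ p := hp.one_le
    rw [Finset.mem_image]
    have hle : ∀ b, b ≤ a → 1 ≤ p ^ b ∧ p ^ b ≤ N := fun b hb =>
      ⟨Nat.one_le_pow _ _ hp.pos, (Nat.pow_le_pow_right hp.pos hb).trans hnN⟩
    rcases Nat.even_or_odd' a with ⟨b, hb | hb⟩
    · refine ⟨(p ^ b, 1), ?_, ?_⟩
      · rw [Finset.mem_product, Finset.mem_Icc, Finset.mem_Icc]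
        exact ⟨hle b (by omega), by simp; omega⟩
      · simp only [one_pow, mul_one]
        rw [← pow_mul, hb]; congr 1; ring
    · refine ⟨(p ^ (b - 1), p), ?_, ?_⟩
      · rw [Finset.mem_product, Finset.mem_Icc, Finset.mem_Icc]
        have := hle 1 (by omega)
        rw [pow_one] at this
        exact ⟨hle (b - 1) (by omega), this⟩
      · simp only
        rw [← pow_mul, ← pow_add]; congr 1; omega
  calc _ ≤ ∑ n ∈ ((Finset.Icc 1 N) ×ˢ (Finset.Icc 1 N)).image
            (fun x : ℕ × ℕ => x.1 ^ 2 * x.2 ^ 3), (n : ℝ) ^ (-(3 / 4) : ℝ) :=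
        Finset.sum_le_sum_of_subset_of_nonneg hsub (fun _ _ _ => by positivity)
    _ ≤ ∑ x ∈ (Finset.Icc 1 N) ×ˢ (Finset.Icc 1 N),
          ((x.1 ^ 2 * x.2 ^ 3 : ℕ) : ℝ) ^ (-(3 / 4) : ℝ) :=
        Finset.sum_image_le_of_nonneg (g := fun x : ℕ × ℕ => x.1 ^ 2 * x.2 ^ 3)
          (f := fun n : ℕ => (n : ℝ) ^ (-(3 / 4) : ℝ)) (fun _ _ => by positivity)
    _ = (∑ x ∈ Finset.Icc 1 N, (x : ℝ) ^ (-(3 / 2) : ℝ)) *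
          ∑ y ∈ Finset.Icc 1 N, (y : ℝ) ^ (-(9 / 4) : ℝ) := by
        rw [Finset.sum_mul_sum, ← Finset.sum_product']
        apply Finset.sum_congr rfl
        intro x _
        push_cast
        rw [Real.mul_rpow (by positivity) (by positivity), ← Real.rpow_natCast, ← Real.rpow_natCast,
          ← Real.rpow_mul (by positivity), ← Real.rpow_mul (by positivity)]
        norm_num
    _ ≤ C1 * C2 := mul_le_mul (h1 N) (h2 N) (Finset.sum_nonneg fun _ _ => by positivity) hC1

theorem inner_prime (r p N : ℕ) (hp : p.Prime) :
    ∑ k ∈ Finset.Icc 1 N, (dFold r k : ℝ) * |(dFold r (p * k) : ℝ) - r * dFold r k| / k ≤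
      (r : ℝ) ^ 3 / p * ∑ k ∈ Finset.Icc 1 N, (dFold r k : ℝ) ^ 2 / k := by
  have hp0 : (0 : ℝ) < p := by exact_mod_cast hp.pos
  set F : ℕ → ℝ := fun k => (dFold r k : ℝ) * |(dFold r (p * k) : ℝ) - r * dFold r k| / k with hF
  have hF0 : ∀ k, 0 ≤ F k := fun k => by positivity
  have hz : ∀ k ∈ Finset.Icc 1 N, k ∉ (Finset.Icc 1 N).filter (fun k => p ∣ k) → F k = 0 := by
    intro k hk hk'
    have hnd : ¬ p ∣ k := fun h => hk' (Finset.mem_filter.2 ⟨hk, h⟩)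
    have hc : p.Coprime k := (Nat.Prime.coprime_iff_not_dvd hp).2 hnd
    simp only [hF]
    rw [dFold_coprime_mul r p k hc, dFold_prime r p hp]
    simp
  rw [← Finset.sum_subset (Finset.filter_subset (fun k => p ∣ k) _) hz]
  have hsub : (Finset.Icc 1 N).filter (fun k => p ∣ k) ⊆
      (Finset.Icc 1 N).image (fun m => p * m) := by
    intro k hk
    rw [Finset.mem_filter, Finset.mem_Icc] at hk
    obtain ⟨⟨h1, h2⟩, m, rfl⟩ := hk
    rw [Finset.mem_image]
    refine ⟨m, Finset.mem_Icc.2 ⟨?_, ?_⟩, rfl⟩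
    · by_contra h
      have : m = 0 := by omega
      subst this; simp at h1
    · exact (Nat.le_mul_of_pos_left m hp.pos).trans h2
  calc _ ≤ ∑ k ∈ (Finset.Icc 1 N).image (fun m => p * m), F k :=
        Finset.sum_le_sum_of_subset_of_nonneg hsub (fun k _ _ => hF0 k)
    _ ≤ ∑ m ∈ Finset.Icc 1 N, F (p * m) :=
        Finset.sum_image_le_of_nonneg (fun k _ => hF0 _)
    _ ≤ ∑ m ∈ Finset.Icc 1 N, (r : ℝ) ^ 3 / p * ((dFold r m : ℝ) ^ 2 / m) := by
        apply Finset.sum_le_sum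
        intro m hm
        have hm0 : (0 : ℝ) < m := by exact_mod_cast (Finset.mem_Icc.1 hm).1
        have h1 : (dFold r (p * m) : ℝ) ≤ r * dFold r m := by
          have := dFold_submul r p m
          rw [dFold_prime r p hp] at this
          exact_mod_cast this
        have h2 : (dFold r (p * (p * m)) : ℝ) ≤ r * dFold r (p * m) := by
          have := dFold_submul r p (p * m)
          rw [dFold_prime r p hp] at this
          exact_mod_cast this
        have h3 : |(dFold r (p * (p * m)) : ℝ) - r * dFold r (p * m)| ≤ r * (r * dFold r m) := by
          rw [abs_sub_comm, abs_of_nonneg (by linarith)]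
          have : (0 : ℝ) ≤ dFold r (p * (p * m)) := by positivity
          have h4 : (r : ℝ) * dFold r (p * m) ≤ r * (r * dFold r m) :=
            mul_le_mul_of_nonneg_left h1 (by positivity)
          linarith
        have h5 := mul_le_mul h1 h3 (abs_nonneg _) (by positivity)
        simp only [hF]
        rw [div_mul_div_comm]
        push_cast
        apply div_le_div_of_nonneg_right _ (by positivity)
        refine h5.trans (le_of_eq ?_)
        ring
    _ = _ := by rw [Finset.mul_sum]

theorem inner_gen (r n N : ℕ) :
    ∑ k ∈ Finset.Icc 1 N, (dFold r k : ℝ) * |(dFold r (n * k) : ℝ) - r * dFold r k| / k ≤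
      ((dFold r n : ℝ) + r) * ∑ k ∈ Finset.Icc 1 N, (dFold r k : ℝ) ^ 2 / k := by
  rw [Finset.mul_sum]
  apply Finset.sum_le_sum
  intro k hk
  have h1 : (dFold r (n * k) : ℝ) ≤ dFold r n * dFold r k := by
    exact_mod_cast dFold_submul r n k
  have h2 : |(dFold r (n * k) : ℝ) - r * dFold r k| ≤ (dFold r n + r) * dFold r k := by
    have ha : (0 : ℝ) ≤ dFold r (n * k) := by positivity
    have hb : (0 : ℝ) ≤ (r : ℝ) * dFold r k := by positivity
    have hc : (0 : ℝ) ≤ (dFold r n : ℝ) * dFold r k := by positivity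
    rw [abs_le]
    constructor <;> nlinarith
  rw [← mul_div_assoc]
  apply div_le_div_of_nonneg_right _ (by positivity)
  calc _ ≤ (dFold r k : ℝ) * ((dFold r n + r) * dFold r k) :=
        mul_le_mul_of_nonneg_left h2 (by positivity)
    _ = _ := by ring

theorem err_bound (r : ℕ) : ∃ C : ℝ, 0 ≤ C ∧ ∀ N : ℕ,
    ∑ n ∈ Finset.Icc 2 N, ∑ k ∈ Finset.Icc 1 N,
      Λ n / n * ((dFold r k : ℝ) * |(dFold r (n * k) : ℝ) - r * dFold r k| / k) ≤
      C * ∑ k ∈ Finset.Icc 1 N, (dFold r k : ℝ) ^ 2 / k := by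
  obtain ⟨C0, hC0, h0⟩ := dFold_primePow_rpow r
  obtain ⟨C1, hC1, h1⟩ := sum_rpow_bdd (3 / 2) (by norm_num)
  obtain ⟨C2, hC2, h2⟩ := sum_primePow_bdd
  refine ⟨2 * r ^ 3 * C1 + 8 * C0 * C2, by positivity, fun N => ?_⟩
  set D := ∑ k ∈ Finset.Icc 1 N, (dFold r k : ℝ) ^ 2 / k with hD
  have hD0 : 0 ≤ D := Finset.sum_nonneg fun _ _ => by positivity
  have hpt : ∀ n ∈ Finset.Icc 2 N, ∑ k ∈ Finset.Icc 1 N,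
      Λ n / n * ((dFold r k : ℝ) * |(dFold r (n * k) : ℝ) - r * dFold r k| / k) ≤
      2 * r ^ 3 * D * (n : ℝ) ^ (-(3 / 2) : ℝ) +
      (if IsPrimePow n ∧ ¬ n.Prime then 8 * C0 * D * (n : ℝ) ^ (-(3 / 4) : ℝ) else 0) := by
    intro n hn
    have hn2 := (Finset.mem_Icc.1 hn).1
    have hn0 : (0 : ℝ) < n := by exact_mod_cast (by omega : 0 < n)
    rw [← Finset.mul_sum]
    have hL0 : 0 ≤ Λ n / n := div_nonneg vonMangoldt_nonneg hn0.le
    have hA : 0 ≤ 2 * r ^ 3 * D * (n : ℝ) ^ (-(3 / 2) : ℝ) := by positivity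
    by_cases hpr : n.Prime
    · have hi := inner_prime r n N hpr
      rw [if_neg (by tauto), add_zero]
      have hlog : Λ n / n ≤ 2 * (n : ℝ) ^ (-(1 / 2) : ℝ) := by
        have := (vonMangoldt_le_log (n := n)).trans
          (Real.log_le_rpow_div hn0.le (show (0 : ℝ) < 1 / 2 by norm_num))
        rw [div_le_iff₀ hn0]
        refine this.trans (le_of_eq ?_)
        rw [mul_assoc, ← Real.rpow_add_one hn0.ne']
        norm_num
        ring
      calc _ ≤ 2 * (n : ℝ) ^ (-(1 / 2) : ℝ) * ((r : ℝ) ^ 3 / n * D) :=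
            mul_le_mul hlog hi (Finset.sum_nonneg fun _ _ => by positivity) (by positivity)
        _ = 2 * r ^ 3 * D * ((n : ℝ) ^ (-(1 / 2) : ℝ) / n) := by ring
        _ = _ := by
          rw [← Real.rpow_sub_one hn0.ne']
          norm_num
    · by_cases hpp : IsPrimePow n
      · rw [if_pos ⟨hpp, hpr⟩]
        have hi := inner_gen r n N
        have hlog : Λ n ≤ 8 * (n : ℝ) ^ (1 / 8 : ℝ) := by
          have := (vonMangoldt_le_log (n := n)).trans
            (Real.log_le_rpow_div hn0.le (show (0 : ℝ) < 1 / 8 by norm_num))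
          refine this.trans (le_of_eq ?_)
          ring
        have hi2 := hi.trans (mul_le_mul_of_nonneg_right (h0 n hpp) hD0)
        refine le_trans ?_ (le_add_of_nonneg_left hA)
        calc _ ≤ (8 * (n : ℝ) ^ (1 / 8 : ℝ) / n) * (C0 * (n : ℝ) ^ (1 / 8 : ℝ) * D) :=
              mul_le_mul (div_le_div_of_nonneg_right hlog hn0.le) hi2
                (Finset.sum_nonneg fun _ _ => by positivity) (by positivity)
          _ = 8 * C0 * D * ((n : ℝ) ^ (1 / 8 : ℝ) * (n : ℝ) ^ (1 / 8 : ℝ) / n) := by ring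
          _ = _ := by
            rw [← Real.rpow_add hn0, ← Real.rpow_sub_one hn0.ne']
            norm_num
      · rw [vonMangoldt_eq_zero_iff.2 hpp]
        rw [if_neg (by tauto), add_zero]
        simpa using hA
  refine (Finset.sum_le_sum hpt).trans ?_
  rw [Finset.sum_add_distrib, ← Finset.sum_filter, ← Finset.mul_sum, ← Finset.mul_sum]
  have e1 : ∑ n ∈ Finset.Icc 2 N, (n : ℝ) ^ (-(3 / 2) : ℝ) ≤ C1 :=
    (Finset.sum_le_sum_of_subset_of_nonneg (Finset.Icc_subset_Icc (by norm_num) le_rfl)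
      (fun _ _ _ => by positivity)).trans (h1 N)
  have e2 := h2 N
  have e3 := mul_le_mul_of_nonneg_left e1 (show 0 ≤ 2 * r ^ 3 * D by positivity)
  have e4 := mul_le_mul_of_nonneg_left e2 (show 0 ≤ 8 * C0 * D by positivity)
  linarith

/-! ### Analytic lemmas -/

theorem sinc_eq_integral (x : ℝ) : Real.sinc x = ∫ t in (0 : ℝ)..1, Real.cos (x * t) := by
  by_cases hx : x = 0
  · subst hx; simp
  · rw [Real.sinc_of_ne_zero hx, intervalIntegral.integral_comp_mul_left (fun y => Real.cos y) hx]
    simp [div_eq_inv_mul]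

theorem sinc_lip (x y : ℝ) : |Real.sinc x - Real.sinc y| ≤ |x - y| := by
  have hc : ∀ z : ℝ, IntervalIntegrable (fun t => Real.cos (z * t)) MeasureTheory.volume 0 1 :=
    fun z => Continuous.intervalIntegrable (by fun_prop) _ _
  rw [sinc_eq_integral, sinc_eq_integral, ← intervalIntegral.integral_sub (hc x) (hc y)]
  have := intervalIntegral.norm_integral_le_of_norm_le_const (a := 0) (b := 1)
    (f := fun t => Real.cos (x * t) - Real.cos (y * t)) (C := |x - y|) ?_
  · simpa using this
  · intro t ht
    rw [Set.uIoc_of_le zero_le_one] at ht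
    refine (Real.abs_cos_sub_cos_le _ _).trans ?_
    rw [← sub_mul, abs_mul, abs_of_pos ht.1]
    exact mul_le_of_le_one_right (abs_nonneg _) ht.2

/-- The inner integral. -/
noncomputable def Jint (f : ℝ → ℝ) (b u : ℝ) : ℝ :=
  ∫ v in (0 : ℝ)..u, b * Real.sinc (b * v) * f (u - v)

theorem Jint_abs (f : ℝ → ℝ) (b F : ℝ) (hb : 0 ≤ b)
    (hF : ∀ x ∈ Set.Icc (0 : ℝ) 1, |f x| ≤ F) (u : ℝ) (hu : u ∈ Set.Icc (0 : ℝ) 1) :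
    |Jint f b u| ≤ b * F := by
  have hF0 : 0 ≤ F := (abs_nonneg _).trans (hF u hu)
  have := intervalIntegral.norm_integral_le_of_norm_le_const (a := 0) (b := u)
    (f := fun v => b * Real.sinc (b * v) * f (u - v)) (C := b * F) ?_
  · unfold Jint
    rw [Real.norm_eq_abs, sub_zero, abs_of_nonneg hu.1] at this
    exact this.trans (mul_le_of_le_one_right (by positivity) hu.2)
  · intro v hv
    rw [Set.uIoc_of_le hu.1] at hv
    rw [Real.norm_eq_abs, abs_mul, abs_mul, abs_of_nonneg hb]
    apply mul_le_mul _ (hF _ ⟨by linarith [hv.2], by linarith [hv.1, hu.2]⟩) (abs_nonneg _) hb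
    exact mul_le_of_le_one_right hb (Real.abs_sinc_le_one _)

theorem Jint_lip_aux (f : ℝ → ℝ) (b F : ℝ) (hb : 0 ≤ b) (hf : Continuous f)
    (hF : ∀ x ∈ Set.Icc (0 : ℝ) 1, |f x| ≤ F)
    (hL : ∀ x ∈ Set.Icc (0 : ℝ) 1, ∀ y ∈ Set.Icc (0 : ℝ) 1, |f x - f y| ≤ F * |x - y|)
    (u : ℝ) (hu : u ∈ Set.Icc (0 : ℝ) 1) (w : ℝ) (hw : w ∈ Set.Icc (0 : ℝ) 1) (hwu : w ≤ u) :
    |Jint f b u - Jint f b w| ≤ 2 * b * F * (u - w) := by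
  have hF0 : 0 ≤ F := (abs_nonneg _).trans (hF u hu)
  have hs : ∀ v, |b * Real.sinc (b * v)| ≤ b := fun v => by
    rw [abs_mul, abs_of_nonneg hb]
    exact mul_le_of_le_one_right hb (Real.abs_sinc_le_one _)
  have hsc : Continuous (fun v => b * Real.sinc (b * v)) :=
    continuous_const.mul (Real.continuous_sinc.comp (by fun_prop))
  have hi : ∀ z x y : ℝ, IntervalIntegrable (fun v => b * Real.sinc (b * v) * f (z - v))
      MeasureTheory.volume x y := fun z x y =>
    (hsc.mul (hf.comp (by fun_prop))).intervalIntegrable _ _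
  have hsplit := intervalIntegral.integral_add_adjacent_intervals (hi u 0 w) (hi u w u)
  have hdec : Jint f b u - Jint f b w =
      (∫ v in w..u, b * Real.sinc (b * v) * f (u - v)) +
      ∫ v in (0 : ℝ)..w, b * Real.sinc (b * v) * (f (u - v) - f (w - v)) := by
    unfold Jint
    rw [← hsplit]
    have : (∫ v in (0 : ℝ)..w, b * Real.sinc (b * v) * (f (u - v) - f (w - v))) =
        (∫ v in (0 : ℝ)..w, b * Real.sinc (b * v) * f (u - v)) -
          ∫ v in (0 : ℝ)..w, b * Real.sinc (b * v) * f (w - v) := by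
      rw [← intervalIntegral.integral_sub (hi u 0 w) (hi w 0 w)]
      congr 1; ext v; ring
    rw [this]; ring
  have h1 := intervalIntegral.norm_integral_le_of_norm_le_const (a := w) (b := u)
    (f := fun v => b * Real.sinc (b * v) * f (u - v)) (C := b * F) (by
      intro v hv
      rw [Set.uIoc_of_le hwu] at hv
      rw [Real.norm_eq_abs, abs_mul]
      exact mul_le_mul (hs v) (hF _ ⟨by linarith [hv.2], by linarith [hv.1, hu.2, hw.1]⟩)
        (abs_nonneg _) hb)
  have h2 := intervalIntegral.norm_integral_le_of_norm_le_const (a := 0) (b := w)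
    (f := fun v => b * Real.sinc (b * v) * (f (u - v) - f (w - v))) (C := b * (F * (u - w))) (by
      intro v hv
      rw [Set.uIoc_of_le hw.1] at hv
      rw [Real.norm_eq_abs, abs_mul]
      apply mul_le_mul (hs v) _ (abs_nonneg _) hb
      refine (hL _ ⟨by linarith [hv.2], by linarith [hv.1, hu.2, hw.1]⟩ _
        ⟨by linarith [hv.2], by linarith [hv.1, hw.2]⟩).trans (le_of_eq ?_)
      rw [abs_of_nonneg (by linarith)]; ring)
  rw [Real.norm_eq_abs, abs_of_nonneg (sub_nonneg.2 hwu)] at h1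
  rw [Real.norm_eq_abs, sub_zero, abs_of_nonneg hw.1] at h2
  rw [hdec]
  refine (abs_add_le _ _).trans ?_
  have h3 : b * (F * (u - w)) * w ≤ b * (F * (u - w)) * 1 :=
    mul_le_mul_of_nonneg_left hw.2 (mul_nonneg hb (mul_nonneg hF0 (by linarith)))
  linarith

theorem Jint_lip (f : ℝ → ℝ) (b F : ℝ) (hb : 0 ≤ b) (hf : Continuous f)
    (hF : ∀ x ∈ Set.Icc (0 : ℝ) 1, |f x| ≤ F)
    (hL : ∀ x ∈ Set.Icc (0 : ℝ) 1, ∀ y ∈ Set.Icc (0 : ℝ) 1, |f x - f y| ≤ F * |x - y|)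
    (u : ℝ) (hu : u ∈ Set.Icc (0 : ℝ) 1) (w : ℝ) (hw : w ∈ Set.Icc (0 : ℝ) 1) :
    |Jint f b u - Jint f b w| ≤ 2 * b * F * |u - w| := by
  rcases le_total w u with h | h
  · rw [abs_of_nonneg (sub_nonneg.2 h)]
    exact Jint_lip_aux f b F hb hf hF hL u hu w hw h
  · rw [abs_sub_comm, abs_sub_comm u w, abs_of_nonneg (sub_nonneg.2 h)]
    exact Jint_lip_aux f b F hb hf hF hL w hw u hu h

theorem prod_lip (p q p' q' P Q Lp Lq : ℝ) (hp : |p| ≤ P) (hq : |q'| ≤ Q)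
    (h1 : |p - p'| ≤ Lp) (h2 : |q - q'| ≤ Lq) : |p * q - p' * q'| ≤ P * Lq + Lp * Q := by
  have : p * q - p' * q' = p * (q - q') + (p - p') * q' := by ring
  rw [this]
  refine (abs_add_le _ _).trans ?_
  rw [abs_mul, abs_mul]
  exact add_le_add (mul_le_mul hp h2 (abs_nonneg _) ((abs_nonneg _).trans hp))
    (mul_le_mul h1 hq (abs_nonneg _) ((abs_nonneg _).trans h1))

theorem inner_approx (f : ℝ → ℝ) (b F : ℝ) (hb : 0 ≤ b) (hf : Continuous f)
    (hF : ∀ x ∈ Set.Icc (0 : ℝ) 1, |f x| ≤ F)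
    (hL : ∀ x ∈ Set.Icc (0 : ℝ) 1, ∀ y ∈ Set.Icc (0 : ℝ) 1, |f x - f y| ≤ F * |x - y|) :
    ∃ C : ℝ, 0 ≤ C ∧ ∀ L l Y : ℝ, 1 ≤ l → l ≤ L → L ≤ 2 * l → 0 ≤ Y → Y ≤ l →
      |∑ n ∈ Finset.Icc 1 ⌊Real.exp Y⌋₊, Λ n / n *
        (b / L * Real.sinc (b * Real.log n / L) * f ((Y - Real.log n) / l)) - Jint f b (Y / l)|
        ≤ C * (1 / L + (1 - l / L)) := by
  have hF0 : 0 ≤ F := (abs_nonneg _).trans (hF 0 (by simp))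
  have h40 : 0 ≤ Real.log 4 := Real.log_nonneg (by norm_num)
  refine ⟨(Real.log 4 + 5 + 1) * (b * F * (b + 3)) + b * (1 + b) * F, by positivity, ?_⟩
  intro L l Y hl hlL hL2 hY0 hYl
  have hl0 : 0 < l := by linarith
  have hLp : 0 < L := by linarith
  have hb' : 0 ≤ b / L := by positivity
  set h : ℝ → ℝ := fun s => b / L * Real.sinc (b * s / L) * f ((Y - s) / l) with hh
  have hmem : ∀ s ∈ Set.Icc 0 Y, (Y - s) / l ∈ Set.Icc (0 : ℝ) 1 := by
    intro s hs
    constructor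
    · exact div_nonneg (by linarith [hs.2]) hl0.le
    · rw [div_le_one hl0]; linarith [hs.1]
  have hP : ∀ s, |b / L * Real.sinc (b * s / L)| ≤ b / L := fun s => by
    rw [abs_mul, abs_of_nonneg hb']
    exact mul_le_of_le_one_right hb' (Real.abs_sinc_le_one _)
  have hHb : ∀ s ∈ Set.Icc 0 Y, |h s| ≤ b / L * F := by
    intro s hs
    simp only [hh]
    rw [abs_mul]
    exact mul_le_mul (hP s) (hF _ (hmem s hs)) (abs_nonneg _) hb'
  have hLip : ∀ x ∈ Set.Icc 0 Y, ∀ y ∈ Set.Icc 0 Y,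
      |h x - h y| ≤ (b * F * (b + 2) / L ^ 2) * |x - y| := by
    intro x hx y hy
    have hq := hL _ (hmem x hx) _ (hmem y hy)
    have e1 : |(Y - x) / l - (Y - y) / l| = |x - y| / l := by
      rw [← sub_div, abs_div, abs_of_pos hl0, abs_sub_comm x y]
      congr 2; ring
    rw [e1] at hq
    have hp : |b / L * Real.sinc (b * x / L) - b / L * Real.sinc (b * y / L)| ≤
        b / L * (b / L * |x - y|) := by
      rw [← mul_sub, abs_mul, abs_of_nonneg hb']
      apply mul_le_mul_of_nonneg_left _ hb'
      refine (sinc_lip _ _).trans (le_of_eq ?_)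
      have e0 : b * x / L - b * y / L = b / L * (x - y) := by ring
      rw [e0, abs_mul, abs_of_nonneg hb']
    have := prod_lip _ _ _ _ _ _ _ _ (hP x) (hF _ (hmem y hy)) hp hq
    refine this.trans ?_
    have hil : 1 / l ≤ 2 / L := by
      rw [div_le_div_iff₀ hl0 hLp]; linarith
    have e2 : F * (|x - y| / l) ≤ F * |x - y| * (2 / L) := by
      have := mul_le_mul_of_nonneg_left hil (show 0 ≤ F * |x - y| by positivity)
      calc F * (|x - y| / l) = F * |x - y| * (1 / l) := by ring
        _ ≤ _ := this
    calc b / L * (F * (|x - y| / l)) + b / L * (b / L * |x - y|) * F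
        ≤ b / L * (F * |x - y| * (2 / L)) + b / L * (b / L * |x - y|) * F := by
          have := mul_le_mul_of_nonneg_left e2 hb'
          linarith
      _ = _ := by field_simp; ring
  have hmain := abel_compare (fun n => Λ n / n) (fun s => s) (fun _ => 1) h Y (Real.log 4 + 5) 1
    (b / L * F) (b * F * (b + 2) / L ^ 2) hY0 (by positivity) zero_le_one
    (fun s => hasDerivAt_id s) continuous_const rfl (by simp) hHb hLip
    (fun j hj _ => mertens_first j hj)
  have hbound : (Real.log 4 + 5 + 1) * (b / L * F + b * F * (b + 2) / L ^ 2 * Y) ≤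
      (Real.log 4 + 5 + 1) * (b * F * (b + 3)) * (1 / L) := by
    rw [mul_assoc (Real.log 4 + 5 + 1) (b * F * (b + 3))]
    apply mul_le_mul_of_nonneg_left _ (by positivity)
    have : b * F * (b + 2) / L ^ 2 * Y ≤ b * F * (b + 2) / L ^ 2 * L :=
      mul_le_mul_of_nonneg_left (by linarith) (by positivity)
    calc _ ≤ b / L * F + b * F * (b + 2) / L ^ 2 * L := by linarith
      _ = _ := by field_simp; ring
  set u := Y / l with hu
  have hu01 : u ∈ Set.Icc (0 : ℝ) 1 := ⟨by positivity, by rw [hu, div_le_one hl0]; exact hYl⟩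
  have hcv : (∫ s in (0 : ℝ)..Y, 1 * h s) =
      ∫ v in (0 : ℝ)..u, l * (b / L * Real.sinc (b * (l / L) * v) * f (u - v)) := by
    have := intervalIntegral.integral_comp_div (a := 0) (b := Y) (c := l)
      (fun v => b / L * Real.sinc (b * (l / L) * v) * f (u - v)) hl0.ne'
    rw [smul_eq_mul, zero_div, ← hu, ← intervalIntegral.integral_const_mul] at this
    rw [← this]
    congr 1
    ext s
    simp only [hh, hu]
    rw [one_mul, sub_div]
    congr 3
    field_simp
  have hsc : ∀ z w : ℝ, Continuous (fun v => z * (w * Real.sinc (b * (l / L) * v) * f (u - v))) :=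
    fun z w => continuous_const.mul ((continuous_const.mul
      (Real.continuous_sinc.comp (by fun_prop))).mul (hf.comp (by fun_prop)))
  have hsc2 : Continuous (fun v => b * Real.sinc (b * v) * f (u - v)) :=
    (continuous_const.mul (Real.continuous_sinc.comp (by fun_prop))).mul (hf.comp (by fun_prop))
  have hrho1 : l / L ≤ 1 := by rw [div_le_one hLp]; exact hlL
  have hrho0 : 0 ≤ l / L := by positivity
  have hdiff : |(∫ s in (0 : ℝ)..Y, 1 * h s) - Jint f b u| ≤ b * (1 + b) * F * (1 - l / L) := by
    rw [hcv, Jint, ← intervalIntegral.integral_sub ((hsc _ _).intervalIntegrable _ _)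
      (hsc2.intervalIntegrable _ _)]
    have := intervalIntegral.norm_integral_le_of_norm_le_const (a := 0) (b := u)
      (f := fun v => l * (b / L * Real.sinc (b * (l / L) * v) * f (u - v)) -
        b * Real.sinc (b * v) * f (u - v)) (C := b * (1 + b) * F * (1 - l / L)) (by
        intro v hv
        rw [Set.uIoc_of_le hu01.1] at hv
        have e : l * (b / L * Real.sinc (b * (l / L) * v) * f (u - v)) -
          b * Real.sinc (b * v) * f (u - v) =
          b * ((Real.sinc (b * (l / L) * v) - Real.sinc (b * v)) -
            (1 - l / L) * Real.sinc (b * (l / L) * v)) * f (u - v) := by ring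
        rw [e, Real.norm_eq_abs, abs_mul, abs_mul, abs_of_nonneg hb]
        have h1 : |Real.sinc (b * (l / L) * v) - Real.sinc (b * v)| ≤ b * (1 - l / L) := by
          refine (sinc_lip _ _).trans ?_
          have : b * (l / L) * v - b * v = - (b * (1 - l / L) * v) := by ring
          rw [this, abs_neg, abs_of_nonneg
            (mul_nonneg (mul_nonneg hb (by linarith)) hv.1.le)]
          exact mul_le_of_le_one_right (mul_nonneg hb (by linarith)) (hv.2.trans hu01.2)
        have h2 : |(1 - l / L) * Real.sinc (b * (l / L) * v)| ≤ 1 - l / L := by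
          rw [abs_mul, abs_of_nonneg (by linarith)]
          exact mul_le_of_le_one_right (by linarith) (Real.abs_sinc_le_one _)
        have h3 := (abs_sub (Real.sinc (b * (l / L) * v) - Real.sinc (b * v))
            ((1 - l / L) * Real.sinc (b * (l / L) * v)))
        have h4 : |Real.sinc (b * (l / L) * v) - Real.sinc (b * v) -
            (1 - l / L) * Real.sinc (b * (l / L) * v)| ≤ (1 + b) * (1 - l / L) := by linarith
        have h5 := hF (u - v) ⟨by linarith [hv.2], by linarith [hv.1, hu01.2]⟩
        calc _ ≤ b * ((1 + b) * (1 - l / L)) * F := by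
              apply mul_le_mul (mul_le_mul_of_nonneg_left h4 hb) h5 (abs_nonneg _)
              exact mul_nonneg hb (mul_nonneg (by linarith) (by linarith))
          _ = _ := by ring)
    rw [Real.norm_eq_abs, sub_zero, abs_of_nonneg hu01.1] at this
    refine this.trans (mul_le_of_le_one_right ?_ hu01.2)
    exact mul_nonneg (by positivity) (by linarith)
  have htri := abs_sub_le (∑ n ∈ Finset.Icc 1 ⌊Real.exp Y⌋₊, Λ n / n * h (Real.log n))
    (∫ s in (0 : ℝ)..Y, 1 * h s) (Jint f b u)
  refine htri.trans ?_
  have hx1 : 0 ≤ (Real.log 4 + 5 + 1) * (b * F * (b + 3)) * (1 - l / L) :=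
    mul_nonneg (by positivity) (by linarith)
  have hx2 : 0 ≤ b * (1 + b) * F * (1 / L) := by positivity
  have h9 := hmain.trans hbound
  nlinarith

theorem outer_approx (a : ℕ → ℝ) (Q : ℝ → ℝ) (A C q l : ℝ) (R : ℕ) (hR : 1 ≤ R) (hl : 1 ≤ l)
    (hq : ∀ x ∈ Set.Icc (0 : ℝ) 1, |Q x| ≤ q)
    (hL : ∀ x ∈ Set.Icc (0 : ℝ) 1, ∀ y ∈ Set.Icc (0 : ℝ) 1, |Q x - Q y| ≤ q * |x - y|)
    (hE : ∀ j : ℕ, 1 ≤ j → Real.log j ≤ l →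
      |∑ n ∈ Finset.Icc 1 j, a n - A * (Real.log j) ^ R| ≤ C * l ^ (R - 1)) :
    |∑ n ∈ Finset.Icc 1 ⌊Real.exp l⌋₊, a n * Q (1 - Real.log n / l) -
      A * R * l ^ R * ∫ u in (0 : ℝ)..1, (1 - u) ^ (R - 1) * Q u|
      ≤ (C + |A| * R) * l ^ (R - 1) * (2 * q) := by
  have hl0 : 0 < l := by linarith
  have hq0 : 0 ≤ q := (abs_nonneg _).trans (hq 0 (by simp))
  have hmem : ∀ s ∈ Set.Icc 0 l, 1 - s / l ∈ Set.Icc (0 : ℝ) 1 := by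
    intro s hs
    have h1 : s / l ≤ 1 := by rw [div_le_one hl0]; exact hs.2
    have h2 : 0 ≤ s / l := div_nonneg hs.1 hl0.le
    constructor <;> linarith
  have hmain := abel_compare a (fun s => A * s ^ R) (fun s => A * (R * s ^ (R - 1)))
    (fun s => Q (1 - s / l)) l (C * l ^ (R - 1)) (|A| * R * l ^ (R - 1)) q (q / l) hl0.le
    (by positivity) (by positivity)
    (fun s => (hasDerivAt_pow R s).const_mul A) (by fun_prop) (by simp; omega)
    (by
      intro s hs
      rw [abs_mul, abs_mul, Nat.abs_cast, mul_assoc, abs_pow, abs_of_nonneg hs.1]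
      have := pow_le_pow_left₀ hs.1 hs.2 (R - 1)
      exact mul_le_mul_of_nonneg_left (mul_le_mul_of_nonneg_left this (by positivity))
        (abs_nonneg _))
    (fun s hs => hq _ (hmem s hs))
    (by
      intro x hx y hy
      refine (hL _ (hmem x hx) _ (hmem y hy)).trans (le_of_eq ?_)
      have : (1 - x / l) - (1 - y / l) = -((x - y) / l) := by ring
      rw [this, abs_neg, abs_div, abs_of_pos hl0]
      ring)
    hE
  have hint : (∫ s in (0 : ℝ)..l, A * (R * s ^ (R - 1)) * Q (1 - s / l)) =
      A * R * l ^ R * ∫ u in (0 : ℝ)..1, (1 - u) ^ (R - 1) * Q u := by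
    have h1 := intervalIntegral.integral_comp_div (a := 0) (b := l) (c := l)
      (fun v => A * (R * (l * v) ^ (R - 1)) * Q (1 - v)) hl0.ne'
    rw [smul_eq_mul, zero_div, div_self hl0.ne'] at h1
    have h2 : (∫ s in (0 : ℝ)..l, A * (R * s ^ (R - 1)) * Q (1 - s / l)) =
        ∫ s in (0 : ℝ)..l, (fun v => A * (R * (l * v) ^ (R - 1)) * Q (1 - v)) (s / l) := by
      congr 1; ext s
      simp only
      rw [mul_div_cancel₀ _ hl0.ne']
    rw [h2, h1]
    have h3 := intervalIntegral.integral_comp_sub_left (a := 0) (b := 1)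
      (fun u => (1 - u) ^ (R - 1) * Q u) 1
    simp only [sub_zero, sub_self] at h3
    rw [← h3, ← intervalIntegral.integral_const_mul, ← intervalIntegral.integral_const_mul]
    congr 1; ext v
    have h4 : l ^ R = l * l ^ (R - 1) := by
      rw [← pow_succ']; congr 1; omega
    rw [h4, mul_pow]
    have : (1 - (1 - v)) = v := by ring
    rw [this]; ring
  rw [hint] at hmain
  refine hmain.trans (le_of_eq ?_)
  field_simp
  ring

/-! ### Assembly -/

theorem step_inner (r : ℕ) (f : ℝ → ℝ) (b L l : ℝ) (hl : 1 ≤ l) (k : ℕ)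
    (hk : k ∈ Finset.Icc 1 ⌊Real.exp l⌋₊) :
    ∑ n ∈ Finset.Icc 2 ⌊Real.exp l⌋₊,
      (if ((n * k : ℕ) : ℝ) ≤ Real.exp l then
        Λ n / n * ((dFold r k : ℝ) * (r * dFold r k) / k) *
          (b / L * Real.sinc (b * Real.log n / L) * f ((l - Real.log k) / l) *
            f ((l - Real.log k - Real.log n) / l)) else 0) =
    r * ((dFold r k : ℝ) ^ 2 / k * (f ((l - Real.log k) / l) *
      ∑ n ∈ Finset.Icc 1 ⌊Real.exp (l - Real.log k)⌋₊, Λ n / n *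
        (b / L * Real.sinc (b * Real.log n / L) * f ((l - Real.log k - Real.log n) / l)))) := by
  have hk1 := (Finset.mem_Icc.1 hk).1
  have hk0 : (0 : ℝ) < k := by exact_mod_cast hk1
  have hexp : Real.exp (l - Real.log k) = Real.exp l / k := by
    rw [Real.exp_sub, Real.exp_log hk0]
  rw [hexp, ← Finset.sum_filter, Finset.mul_sum, Finset.mul_sum, Finset.mul_sum]
  have hsub : (Finset.Icc 2 ⌊Real.exp l⌋₊).filter (fun n => ((n * k : ℕ) : ℝ) ≤ Real.exp l) ⊆
      Finset.Icc 1 ⌊Real.exp l / k⌋₊ := by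
    intro n hn
    rw [Finset.mem_filter, Finset.mem_Icc] at hn
    rw [Finset.mem_Icc]
    refine ⟨by omega, Nat.le_floor ?_⟩
    rw [le_div_iff₀ hk0]
    exact_mod_cast hn.2
  rw [← Finset.sum_subset hsub]
  · apply Finset.sum_congr rfl
    intro n _
    ring
  · intro n hn hn'
    rw [Finset.mem_Icc] at hn
    have hn1 : n = 1 := by
      by_contra hne
      apply hn'
      rw [Finset.mem_filter, Finset.mem_Icc]
      have h1 : (n : ℝ) ≤ Real.exp l / k := (Nat.le_floor_iff (by positivity)).1 hn.2
      have h2 : (n : ℝ) * k ≤ Real.exp l := by rwa [le_div_iff₀ hk0] at h1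
      refine ⟨⟨by omega, Nat.le_floor ?_⟩, by exact_mod_cast h2⟩
      have hk1' : (1 : ℝ) ≤ k := by exact_mod_cast hk1
      nlinarith [Nat.cast_nonneg (α := ℝ) n]
    subst hn1
    simp

theorem core_bound (r : ℕ) (hr : 1 ≤ r) (f : ℝ → ℝ) (b F : ℝ) (hb : 0 ≤ b) (hf : Continuous f)
    (hF : ∀ x ∈ Set.Icc (0 : ℝ) 1, |f x| ≤ F)
    (hL : ∀ x ∈ Set.Icc (0 : ℝ) 1, ∀ y ∈ Set.Icc (0 : ℝ) 1, |f x - f y| ≤ F * |x - y|)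
    (A C0 : ℝ) (hC0 : 0 ≤ C0) :
    ∃ C : ℝ, 0 ≤ C ∧ ∀ L l : ℝ, 1 ≤ l → l ≤ L → L ≤ 2 * l →
      (∀ j : ℕ, 1 ≤ j → Real.log j ≤ l →
        |∑ n ∈ Finset.Icc 1 j, (dFold r n : ℝ) ^ 2 / n - A * (Real.log j) ^ (r ^ 2)|
          ≤ C0 * l ^ (r ^ 2 - 1)) →
      |∑ n ∈ Finset.Icc 2 ⌊Real.exp l⌋₊, ∑ k ∈ Finset.Icc 1 ⌊Real.exp l⌋₊,
        (if ((n * k : ℕ) : ℝ) ≤ Real.exp l then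
          Λ n / n * ((dFold r k : ℝ) * dFold r (n * k) / k) *
            (b / L * Real.sinc (b * Real.log n / L) * f ((l - Real.log k) / l) *
              f ((l - Real.log k - Real.log n) / l)) else 0) -
        r * (A * ((r ^ 2 : ℕ) : ℝ) * L ^ (r ^ 2) *
          ∫ u in (0 : ℝ)..1, (1 - u) ^ (r ^ 2 - 1) * (f u * Jint f b u))|
      ≤ C * (L ^ (r ^ 2 - 1) * (1 + (L - l))) := by
  have hF0 : 0 ≤ F := (abs_nonneg _).trans (hF 0 (by simp))
  obtain ⟨Ce, hCe, hce⟩ := err_bound r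
  obtain ⟨Ci, hCi, hci⟩ := inner_approx f b F hb hf hF hL
  set R := r ^ 2 with hRdef
  have hR : 1 ≤ R := Nat.one_le_pow _ _ hr
  set I := ∫ u in (0 : ℝ)..1, (1 - u) ^ (R - 1) * (f u * Jint f b u) with hI
  set D0 := |A| + C0 with hD0
  have hD00 : 0 ≤ D0 := by positivity
  refine ⟨b * F ^ 2 * Ce * D0 + r * (F * Ci * D0) + r * ((C0 + |A| * R) * (2 * (3 * b * F ^ 2)))
    + r * (|A| * R * R * |I|), by positivity, ?_⟩
  intro L l hl hlL hL2 hE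
  have hl0 : 0 < l := by linarith
  have hLp : 0 < L := by linarith
  set N := ⌊Real.exp l⌋₊ with hN
  have hN1 : 1 ≤ N := Nat.le_floor (by simpa using hl0.le)
  have hNr : (0 : ℝ) < N := by exact_mod_cast hN1
  have hlogk : ∀ k ∈ Finset.Icc 1 N, 0 ≤ Real.log k ∧ Real.log k ≤ l := by
    intro k hk
    rw [Finset.mem_Icc] at hk
    have hk0 : (0 : ℝ) < k := by exact_mod_cast hk.1
    refine ⟨Real.log_natCast_nonneg k, ?_⟩
    rw [Real.log_le_iff_le_exp hk0]
    exact (Nat.le_floor_iff (Real.exp_pos l).le).1 hk.2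
  have hlogN : Real.log N ≤ l := (hlogk N (Finset.mem_Icc.2 ⟨hN1, le_rfl⟩)).2
  have hlogN0 : 0 ≤ Real.log N := Real.log_natCast_nonneg N
  set D := ∑ k ∈ Finset.Icc 1 N, (dFold r k : ℝ) ^ 2 / k with hD
  have hDn : 0 ≤ D := Finset.sum_nonneg fun _ _ => by positivity
  have hLR : L ^ R = L * L ^ (R - 1) := by rw [← pow_succ']; congr 1; omega
  have hP0 : 0 ≤ L ^ (R - 1) := by positivity
  have hDle : D ≤ D0 * (L * L ^ (R - 1)) := by
    have h1 := hE N hN1 hlogN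
    have h2 := (abs_le.1 h1).2
    have h3 : A * Real.log N ^ R ≤ |A| * L ^ R := by
      calc A * Real.log N ^ R ≤ |A| * Real.log N ^ R :=
            mul_le_mul_of_nonneg_right (le_abs_self A) (by positivity)
        _ ≤ |A| * L ^ R := mul_le_mul_of_nonneg_left
            (pow_le_pow_left₀ hlogN0 (by linarith) R) (abs_nonneg _)
    have h4 : C0 * l ^ (R - 1) ≤ C0 * L ^ R := by
      apply mul_le_mul_of_nonneg_left _ hC0
      calc l ^ (R - 1) ≤ L ^ (R - 1) := pow_le_pow_left₀ hl0.le hlL _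
        _ ≤ L ^ R := pow_le_pow_right₀ (by linarith) (by omega)
    rw [← hLR, hD0, add_mul]
    linarith
  have hDL : D * (1 / L) ≤ D0 * L ^ (R - 1) := by
    rw [mul_one_div, div_le_iff₀ hLp]
    linarith
  have hb' : 0 ≤ b / L := by positivity
  -- Step A: replace `dFold r (n * k)` by `r * dFold r k`.
  have hA1 : |∑ n ∈ Finset.Icc 2 N, ∑ k ∈ Finset.Icc 1 N,
        (if ((n * k : ℕ) : ℝ) ≤ Real.exp l then
          Λ n / n * ((dFold r k : ℝ) * dFold r (n * k) / k) *
            (b / L * Real.sinc (b * Real.log n / L) * f ((l - Real.log k) / l) *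
              f ((l - Real.log k - Real.log n) / l)) else 0) -
      ∑ n ∈ Finset.Icc 2 N, ∑ k ∈ Finset.Icc 1 N,
        (if ((n * k : ℕ) : ℝ) ≤ Real.exp l then
          Λ n / n * ((dFold r k : ℝ) * (r * dFold r k) / k) *
            (b / L * Real.sinc (b * Real.log n / L) * f ((l - Real.log k) / l) *
              f ((l - Real.log k - Real.log n) / l)) else 0)| ≤
      b * F ^ 2 * Ce * D0 * L ^ (R - 1) := by
    rw [← Finset.sum_sub_distrib]
    have hbd : ∀ n ∈ Finset.Icc 2 N, ∀ k ∈ Finset.Icc 1 N,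
        |(if ((n * k : ℕ) : ℝ) ≤ Real.exp l then
          Λ n / n * ((dFold r k : ℝ) * dFold r (n * k) / k) *
            (b / L * Real.sinc (b * Real.log n / L) * f ((l - Real.log k) / l) *
              f ((l - Real.log k - Real.log n) / l)) else 0) -
        (if ((n * k : ℕ) : ℝ) ≤ Real.exp l then
          Λ n / n * ((dFold r k : ℝ) * (r * dFold r k) / k) *
            (b / L * Real.sinc (b * Real.log n / L) * f ((l - Real.log k) / l) *
              f ((l - Real.log k - Real.log n) / l)) else 0)| ≤
        Λ n / n * ((dFold r k : ℝ) * |(dFold r (n * k) : ℝ) - r * dFold r k| / k) *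
          (b / L * F * F) := by
      intro n hn k hk
      have hL0 : 0 ≤ Λ n / n := div_nonneg vonMangoldt_nonneg (Nat.cast_nonneg n)
      have hX : 0 ≤ Λ n / n *
          ((dFold r k : ℝ) * |(dFold r (n * k) : ℝ) - r * dFold r k| / k) := by positivity
      split_ifs with hnk
      · have hk0 : (0 : ℝ) < k := by exact_mod_cast (Finset.mem_Icc.1 hk).1
        have hn0 : (0 : ℝ) < n := by
          exact_mod_cast (by linarith [(Finset.mem_Icc.1 hn).1] : 0 < n)
        have hlk := hlogk k hk
        have hln : 0 ≤ Real.log n := Real.log_natCast_nonneg n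
        have hsum : Real.log n + Real.log k ≤ l := by
          rw [← Real.log_mul hn0.ne' hk0.ne', Real.log_le_iff_le_exp (by positivity)]
          exact_mod_cast hnk
        have hf1 := hF ((l - Real.log k) / l)
          ⟨div_nonneg (by linarith) hl0.le, by rw [div_le_one hl0]; linarith⟩
        have hf2 := hF ((l - Real.log k - Real.log n) / l)
          ⟨div_nonneg (by linarith) hl0.le, by rw [div_le_one hl0]; linarith⟩
        have hW : |b / L * Real.sinc (b * Real.log n / L) * f ((l - Real.log k) / l) *
              f ((l - Real.log k - Real.log n) / l)| ≤ b / L * F * F := by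
          rw [abs_mul, abs_mul, abs_mul, abs_of_nonneg hb']
          apply mul_le_mul (mul_le_mul _ hf1 (abs_nonneg _) hb') hf2 (abs_nonneg _)
            (by positivity)
          exact mul_le_of_le_one_right hb' (Real.abs_sinc_le_one _)
        rw [← sub_mul, abs_mul]
        apply mul_le_mul _ hW (abs_nonneg _) hX
        apply le_of_eq
        rw [← mul_sub, ← sub_div, ← mul_sub, abs_mul, abs_of_nonneg hL0, abs_div, abs_mul,
          Nat.abs_cast, Nat.abs_cast]
      · rw [sub_zero, abs_zero]
        positivity
    calc _ ≤ ∑ n ∈ Finset.Icc 2 N, ∑ k ∈ Finset.Icc 1 N,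
          Λ n / n * ((dFold r k : ℝ) * |(dFold r (n * k) : ℝ) - r * dFold r k| / k) *
          (b / L * F * F) := by
          refine (Finset.abs_sum_le_sum_abs _ _).trans ?_
          apply Finset.sum_le_sum
          intro n hn
          rw [← Finset.sum_sub_distrib]
          refine (Finset.abs_sum_le_sum_abs _ _).trans ?_
          exact Finset.sum_le_sum (hbd n hn)
      _ = (∑ n ∈ Finset.Icc 2 N, ∑ k ∈ Finset.Icc 1 N,
          Λ n / n * ((dFold r k : ℝ) * |(dFold r (n * k) : ℝ) - r * dFold r k| / k)) *
          (b / L * F * F) := by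
          simp only [Finset.sum_mul]
      _ ≤ (Ce * D) * (b / L * F * F) :=
          mul_le_mul_of_nonneg_right (hce N) (by positivity)
      _ = b * F ^ 2 * Ce * (D * (1 / L)) := by ring
      _ ≤ b * F ^ 2 * Ce * (D0 * L ^ (R - 1)) := mul_le_mul_of_nonneg_left hDL (by positivity)
      _ = _ := by ring
  -- Step B: the inner sum.
  have hB1 : ∑ n ∈ Finset.Icc 2 N, ∑ k ∈ Finset.Icc 1 N,
        (if ((n * k : ℕ) : ℝ) ≤ Real.exp l then
          Λ n / n * ((dFold r k : ℝ) * (r * dFold r k) / k) *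
            (b / L * Real.sinc (b * Real.log n / L) * f ((l - Real.log k) / l) *
              f ((l - Real.log k - Real.log n) / l)) else 0) =
      r * ∑ k ∈ Finset.Icc 1 N, ((dFold r k : ℝ) ^ 2 / k * (f ((l - Real.log k) / l) *
      ∑ n ∈ Finset.Icc 1 ⌊Real.exp (l - Real.log k)⌋₊, Λ n / n *
        (b / L * Real.sinc (b * Real.log n / L) * f ((l - Real.log k - Real.log n) / l)))) := by
    rw [Finset.sum_comm, Finset.mul_sum]
    apply Finset.sum_congr rfl
    intro k hk
    exact step_inner r f b L l hl k hk
  have hu : ∀ k : ℕ, (l - Real.log k) / l = 1 - Real.log k / l := by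
    intro k
    rw [sub_div, div_self hl0.ne']
  have hB2 : |∑ k ∈ Finset.Icc 1 N, ((dFold r k : ℝ) ^ 2 / k * (f ((l - Real.log k) / l) *
      ∑ n ∈ Finset.Icc 1 ⌊Real.exp (l - Real.log k)⌋₊, Λ n / n *
        (b / L * Real.sinc (b * Real.log n / L) * f ((l - Real.log k - Real.log n) / l)))) -
      ∑ k ∈ Finset.Icc 1 N, ((dFold r k : ℝ) ^ 2 / k *
        (f (1 - Real.log k / l) * Jint f b (1 - Real.log k / l)))| ≤
      F * Ci * D0 * (L ^ (R - 1) * (1 + (L - l))) := by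
    rw [← Finset.sum_sub_distrib]
    calc _ ≤ ∑ k ∈ Finset.Icc 1 N, (dFold r k : ℝ) ^ 2 / k *
          (F * (Ci * (1 / L + (1 - l / L)))) := by
          refine (Finset.abs_sum_le_sum_abs _ _).trans ?_
          apply Finset.sum_le_sum
          intro k hk
          have hlk := hlogk k hk
          rw [← hu, ← mul_sub, ← mul_sub, abs_mul, abs_mul,
            abs_of_nonneg (show 0 ≤ (dFold r k : ℝ) ^ 2 / k by positivity)]
          have hf1 := hF ((l - Real.log k) / l)
            ⟨div_nonneg (by linarith) hl0.le, by rw [div_le_one hl0]; linarith⟩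
          have hin := hci L l (l - Real.log k) hl hlL hL2 (by linarith) (by linarith)
          exact mul_le_mul_of_nonneg_left (mul_le_mul hf1 hin (abs_nonneg _) hF0) (by positivity)
      _ = D * (F * (Ci * (1 / L + (1 - l / L)))) := by rw [← Finset.sum_mul]
      _ = F * Ci * (1 + (L - l)) * (D * (1 / L)) := by field_simp
      _ ≤ F * Ci * (1 + (L - l)) * (D0 * L ^ (R - 1)) :=
          mul_le_mul_of_nonneg_left hDL (mul_nonneg (by positivity) (by linarith))
      _ = _ := by ring
  -- Step C: the outer sum.
  have hq1 : ∀ x ∈ Set.Icc (0 : ℝ) 1, |f x * Jint f b x| ≤ 3 * b * F ^ 2 := by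
    intro x hx
    rw [abs_mul]
    have := mul_le_mul (hF x hx) (Jint_abs f b F hb hF x hx) (abs_nonneg _) hF0
    have h2 : 0 ≤ b * F ^ 2 := by positivity
    nlinarith
  have hq2 : ∀ x ∈ Set.Icc (0 : ℝ) 1, ∀ y ∈ Set.Icc (0 : ℝ) 1,
      |f x * Jint f b x - f y * Jint f b y| ≤ 3 * b * F ^ 2 * |x - y| := by
    intro x hx y hy
    refine (prod_lip _ _ _ _ _ _ _ _ (hF x hx) (Jint_abs f b F hb hF y hy) (hL x hx y hy)
      (Jint_lip f b F hb hf hF hL x hx y hy)).trans (le_of_eq ?_)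
    ring
  have hC1 := outer_approx (fun k => (dFold r k : ℝ) ^ 2 / k) (fun u => f u * Jint f b u) A C0
    (3 * b * F ^ 2) l R hR hl hq1 hq2 hE
  have hC2 : |A * R * l ^ R * I - A * R * L ^ R * I| ≤ |A| * R * R * |I| *
      (L ^ (R - 1) * (1 + (L - l))) := by
    have h1 : A * R * l ^ R * I - A * R * L ^ R * I = A * R * I * (l ^ R - L ^ R) := by ring
    rw [h1, abs_mul, abs_mul, abs_mul, Nat.abs_cast]
    have h2 := abs_pow_sub_pow_le l L R
    rw [abs_of_pos hl0, abs_of_pos hLp, max_eq_right hlL, abs_sub_comm l L,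
      abs_of_nonneg (sub_nonneg.2 hlL)] at h2
    have h3 : (L - l) * R * L ^ (R - 1) ≤ R * (L ^ (R - 1) * (1 + (L - l))) := by
      have : 0 ≤ (R : ℝ) * L ^ (R - 1) := by positivity
      nlinarith
    calc _ ≤ |A| * R * |I| * (R * (L ^ (R - 1) * (1 + (L - l)))) :=
          mul_le_mul_of_nonneg_left (h2.trans h3) (by positivity)
      _ = _ := by ring
  have hC3 : (C0 + |A| * R) * l ^ (R - 1) * (2 * (3 * b * F ^ 2)) ≤
      (C0 + |A| * R) * (2 * (3 * b * F ^ 2)) * (L ^ (R - 1) * (1 + (L - l))) := by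
    have h1 : l ^ (R - 1) ≤ L ^ (R - 1) * (1 + (L - l)) :=
      (pow_le_pow_left₀ hl0.le hlL _).trans
        (le_mul_of_one_le_right hP0 (by linarith))
    have := mul_le_mul_of_nonneg_left h1
      (show 0 ≤ (C0 + |A| * R) * (2 * (3 * b * F ^ 2)) by positivity)
    linarith
  have hA2 : b * F ^ 2 * Ce * D0 * L ^ (R - 1) ≤
      b * F ^ 2 * Ce * D0 * (L ^ (R - 1) * (1 + (L - l))) :=
    mul_le_mul_of_nonneg_left (le_mul_of_one_le_right hP0 (by linarith)) (by positivity)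
  rw [hB1] at hA1
  have hr0 : (0 : ℝ) ≤ r := Nat.cast_nonneg r
  have t1 := abs_sub_le
    (∑ k ∈ Finset.Icc 1 N, ((dFold r k : ℝ) ^ 2 / k * (f ((l - Real.log k) / l) *
      ∑ n ∈ Finset.Icc 1 ⌊Real.exp (l - Real.log k)⌋₊, Λ n / n *
        (b / L * Real.sinc (b * Real.log n / L) * f ((l - Real.log k - Real.log n) / l)))))
    (∑ k ∈ Finset.Icc 1 N, ((dFold r k : ℝ) ^ 2 / k *
        (f (1 - Real.log k / l) * Jint f b (1 - Real.log k / l)))) (A * R * L ^ R * I)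
  have t2 := abs_sub_le (∑ k ∈ Finset.Icc 1 N, ((dFold r k : ℝ) ^ 2 / k *
        (f (1 - Real.log k / l) * Jint f b (1 - Real.log k / l)))) (A * R * l ^ R * I)
        (A * R * L ^ R * I)
  have t3 := t1.trans (add_le_add hB2 (t2.trans (add_le_add (hC1.trans hC3) hC2)))
  have t4 := mul_le_mul_of_nonneg_left t3 hr0
  rw [← abs_of_nonneg hr0, ← abs_mul, mul_sub, abs_of_nonneg hr0] at t4
  refine (abs_sub_le _ _ _).trans ((add_le_add (hA1.trans hA2) t4).trans (le_of_eq ?_))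
  ring

theorem poly_lip (p : Polynomial ℝ) : ∃ F : ℝ, (∀ x ∈ Set.Icc (0:ℝ) 1, |p.eval x| ≤ F) ∧
    (∀ x ∈ Set.Icc (0:ℝ) 1, ∀ y ∈ Set.Icc (0:ℝ) 1, |p.eval x - p.eval y| ≤ F * |x - y|) := by
  obtain ⟨F1, h1⟩ := (isCompact_Icc (a := (0:ℝ)) (b := 1)).exists_bound_of_continuousOn
    (f := fun x => p.eval x) p.continuous.continuousOn
  obtain ⟨F2, h2⟩ := (isCompact_Icc (a := (0:ℝ)) (b := 1)).exists_bound_of_continuousOn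
    (f := fun x => p.derivative.eval x) p.derivative.continuous.continuousOn
  refine ⟨max F1 F2, fun x hx => (h1 x hx).trans (le_max_left _ _), fun x hx y hy => ?_⟩
  have := (convex_Icc (0:ℝ) 1).norm_image_sub_le_of_norm_hasDerivWithin_le
    (f := fun x => p.eval x) (f' := fun x => p.derivative.eval x) (C := F2)
    (fun x _ => (p.hasDerivAt x).hasDerivWithinAt) h2 hy hx
  exact this.trans (mul_le_mul_of_nonneg_right (le_max_right _ _) (norm_nonneg _))

theorem Jint_eq (f : ℝ → ℝ) (b u : ℝ) (hu : 0 ≤ u) :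
    ∫ v in (0:ℝ)..u, Real.sin (b * v) / v * f (u - v) = Jint f b u := by
  unfold Jint
  apply intervalIntegral.integral_congr_ae
  refine Filter.Eventually.of_forall fun v hv => ?_
  rw [Set.uIoc_of_le hu] at hv
  have hv0 : v ≠ 0 := hv.1.ne'
  congr 1
  by_cases hb : b = 0
  · simp [hb]
  · rw [Real.sinc_of_ne_zero (mul_ne_zero hb hv0)]
    field_simp

theorem log_four (L : ℝ) (hL : 64 ≤ L) : 4 * Real.log L ≤ L := by
  have h := Real.log_le_rpow_div (x := L) (ε := 1/2) (by linarith) (by norm_num)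
  rw [← Real.sqrt_eq_rpow] at h
  have h8 : 8 ≤ Real.sqrt L := Real.le_sqrt_of_sq_le (by linarith)
  have hs := Real.mul_self_sqrt (show 0 ≤ L by linarith)
  have : 4 * Real.log L ≤ 8 * Real.sqrt L := by linarith
  nlinarith

theorem offdiagonal_term_N1 (r : ℕ) (hr : 1 ≤ r) (f₁ : Polynomial ℝ) (A : ℝ)
    (hA : ∃ C : ℝ, ∀ T x : ℝ, 2 ≤ x → x ≤ T →
      |(∑ k ∈ Finset.Icc 1 ⌊x⌋₊, (dFold r k : ℝ) ^ 2 / k) - A * (Real.log x) ^ (r ^ 2)|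
        ≤ C * (Real.log T) ^ (r ^ 2 - 1))
    (c : ℝ) (hc : 0 < c) (ε : ℝ) (hε : 0 < ε) :
    ∃ C T₀ : ℝ, ∀ T : ℝ, T₀ ≤ T →
      |(2 / π) * (∑ n ∈ Finset.Icc 2 ⌊Kof T⌋₊, ∑ k ∈ Finset.Icc 1 ⌊Kof T⌋₊,
          if ((n * k : ℕ) : ℝ) ≤ Kof T then
            (dFold r k : ℝ) * (dFold r (n * k) : ℝ) * Λ n / (k * n * Real.log n) *
              Real.sin (π * c * Real.log n / Real.log T) *
              (f₁.eval (Real.log (Kof T / k) / Real.log (Kof T))) *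
              (f₁.eval (Real.log (Kof T / (n * k)) / Real.log (Kof T)))
          else 0) -
        (2 * A * (r : ℝ) ^ 3 / π) * (Real.log T) ^ (r ^ 2) *
          ∫ u in (0:ℝ)..1, (1 - u) ^ (r ^ 2 - 1) * f₁.eval u *
            ∫ v in (0:ℝ)..u, Real.sin (π * c * v) / v * f₁.eval (u - v)|
      ≤ C * (Real.log T) ^ (((r : ℝ) ^ 2 - 1) + ε) := by
  obtain ⟨C1, hA⟩ := hA
  obtain ⟨F, hF, hLip⟩ := poly_lip f₁
  have hb0 : 0 < π * c := mul_pos Real.pi_pos hc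
  obtain ⟨C, hC, hcore⟩ := core_bound r hr (fun x => f₁.eval x) (π * c) F hb0.le
    f₁.continuous hF hLip A (|C1| + 1) (by positivity)
  refine ⟨(2 / π) * (C * (3 / ε)), Real.exp 64, fun T hT => ?_⟩
  have hT0 : 0 < T := (Real.exp_pos _).trans_le hT
  have hL64 : 64 ≤ Real.log T := (Real.le_log_iff_exp_le hT0).2 hT
  obtain ⟨L, hLdef⟩ : ∃ L, L = Real.log T := ⟨_, rfl⟩
  rw [← hLdef] at hL64 ⊢
  have hL0 : 0 < L := by linarith
  have h4 := log_four L hL64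
  have hlog1 : 1 ≤ Real.log L := by
    rw [Real.le_log_iff_exp_le hL0]
    have := Real.exp_one_lt_d9
    linarith
  obtain ⟨l, hldef⟩ : ∃ l, l = L - 2 * Real.log L := ⟨_, rfl⟩
  have hK : Kof T = Real.exp l := by
    unfold Kof
    rw [← hLdef, hldef, Real.exp_sub, hLdef, Real.exp_log hT0, ← hLdef, two_mul, Real.exp_add,
      Real.exp_log hL0, zpow_neg, div_eq_mul_inv]
    norm_cast
    rw [sq]
  have hl1 : 1 ≤ l := by linarith
  have hlL : l ≤ L := by linarith
  have hL2 : L ≤ 2 * l := by linarith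
  have hE : ∀ j : ℕ, 1 ≤ j → Real.log j ≤ l →
      |∑ n ∈ Finset.Icc 1 j, (dFold r n : ℝ) ^ 2 / n - A * (Real.log j) ^ (r ^ 2)|
        ≤ (|C1| + 1) * l ^ (r ^ 2 - 1) := by
    intro j hj hjl
    have hpow : 1 ≤ l ^ (r ^ 2 - 1) := one_le_pow₀ hl1
    rcases Nat.lt_or_ge j 2 with hj2 | hj2
    · have : j = 1 := by omega
      subst this
      have hr2 : r ^ 2 ≠ 0 := by positivity
      simp only [Finset.Icc_self, Finset.sum_singleton, dFold_one, Nat.cast_one, Real.log_one,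
        zero_pow hr2, one_pow, div_one, mul_zero, sub_zero, abs_one]
      nlinarith [abs_nonneg C1]
    · have hj0 : (0:ℝ) < j := by exact_mod_cast hj
      have h := hA (Real.exp l) j (by exact_mod_cast hj2) ((Real.log_le_iff_le_exp hj0).1 hjl)
      rw [Nat.floor_natCast, Real.log_exp] at h
      refine h.trans (mul_le_mul_of_nonneg_right ?_ (by positivity))
      linarith [le_abs_self C1]
  have hmain := hcore L l hl1 hlL hL2 hE
  have hsum : (∑ n ∈ Finset.Icc 2 ⌊Kof T⌋₊, ∑ k ∈ Finset.Icc 1 ⌊Kof T⌋₊,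
          if ((n * k : ℕ) : ℝ) ≤ Kof T then
            (dFold r k : ℝ) * (dFold r (n * k) : ℝ) * Λ n / (k * n * Real.log n) *
              Real.sin (π * c * Real.log n / L) *
              (f₁.eval (Real.log (Kof T / k) / Real.log (Kof T))) *
              (f₁.eval (Real.log (Kof T / (n * k)) / Real.log (Kof T)))
          else 0) = ∑ n ∈ Finset.Icc 2 ⌊Real.exp l⌋₊, ∑ k ∈ Finset.Icc 1 ⌊Real.exp l⌋₊,
        (if ((n * k : ℕ) : ℝ) ≤ Real.exp l then
          Λ n / n * ((dFold r k : ℝ) * dFold r (n * k) / k) *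
            (π * c / L * Real.sinc (π * c * Real.log n / L) * f₁.eval ((l - Real.log k) / l) *
              f₁.eval ((l - Real.log k - Real.log n) / l)) else 0) := by
    rw [hK]
    refine Finset.sum_congr rfl fun n hn => Finset.sum_congr rfl fun k hk => ?_
    have hn2 := (Finset.mem_Icc.1 hn).1
    have hk1 := (Finset.mem_Icc.1 hk).1
    have hn0 : (n : ℝ) ≠ 0 := by exact_mod_cast (by omega : n ≠ 0)
    have hk0 : (k : ℝ) ≠ 0 := by exact_mod_cast (by omega : k ≠ 0)
    have hln : Real.log n ≠ 0 := (Real.log_pos (by exact_mod_cast hn2)).ne'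
    have hpi := Real.pi_ne_zero
    split_ifs with h
    · rw [Real.log_div (Real.exp_ne_zero _) hk0, Real.log_div (Real.exp_ne_zero _)
        (mul_ne_zero hn0 hk0), Real.log_mul hn0 hk0, Real.log_exp,
        Real.sinc_of_ne_zero (div_ne_zero (mul_ne_zero hb0.ne' hln) hL0.ne'),
        show l - (Real.log n + Real.log k) = l - Real.log k - Real.log n by ring]
      generalize f₁.eval ((l - Real.log k) / l) = X
      generalize f₁.eval ((l - Real.log k - Real.log n) / l) = Y
      generalize Real.sin (π * c * Real.log n / L) = Z
      have hc0 := hc.ne'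
      field_simp
    · rfl
  have hint : (∫ u in (0:ℝ)..1, (1 - u) ^ (r ^ 2 - 1) * f₁.eval u *
            ∫ v in (0:ℝ)..u, Real.sin (π * c * v) / v * f₁.eval (u - v)) =
      ∫ u in (0:ℝ)..1, (1 - u) ^ (r ^ 2 - 1) * (f₁.eval u *
        Jint (fun x => f₁.eval x) (π * c) u) := by
    apply intervalIntegral.integral_congr
    intro u hu
    rw [Set.uIcc_of_le zero_le_one] at hu
    have := Jint_eq (fun x => f₁.eval x) (π * c) u hu.1
    simp only at this ⊢
    rw [this, mul_assoc]
  rw [hsum, hint]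
  have hfin : C * (L ^ (r ^ 2 - 1) * (1 + (L - l))) ≤
      C * (3 / ε) * L ^ (((r : ℝ) ^ 2 - 1) + ε) := by
    have e1 : ((r : ℝ) ^ 2 - 1) = ((r ^ 2 - 1 : ℕ) : ℝ) := by
      rw [Nat.cast_sub (Nat.one_le_pow _ _ hr)]
      push_cast
      ring
    rw [Real.rpow_add hL0, e1, Real.rpow_natCast, mul_assoc]
    apply mul_le_mul_of_nonneg_left _ hC
    have h1 : 1 + (L - l) ≤ 3 * (L ^ ε / ε) := by
      have := Real.log_le_rpow_div hL0.le hε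
      linarith
    calc L ^ (r ^ 2 - 1) * (1 + (L - l)) ≤ L ^ (r ^ 2 - 1) * (3 * (L ^ ε / ε)) :=
          mul_le_mul_of_nonneg_left h1 (by positivity)
      _ = _ := by ring
  have h2pi : 0 ≤ 2 / π := by positivity
  have hall := mul_le_mul_of_nonneg_left (hmain.trans hfin) h2pi
  rw [← abs_of_nonneg h2pi, ← abs_mul, abs_of_nonneg h2pi, mul_sub] at hall
  refine le_trans (le_of_eq ?_) (hall.trans (le_of_eq (by ring)))
  congr 2
  push_cast
  ring
end
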